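/- arXiv:1112.4561 — 2 statements merged into one kernel-verified Lean document; each statement's English description precedes it below -/
import Mathlib

section
/- For every prime p, there exists a finite simple group G with a nontrivial Sylow p-subgroup P such that some left coset of P in G contains no p'-elements, i.e., no elements of order prime to p. -/
open scoped TensorProduct Pointwise

namespace CosetAux
open Polynomial Filter Topology

section D
variable {K : Type} [Field K] [Fintype K]

lemma finite_monicDeg (d : ℕ) : {f : K[X] | f.Monic ∧ f.natDegree = d}.Finite := by
  have : Finite (Polynomial.degreeLT K (d+1)) :=
    Finite.of_equiv _ (Polynomial.degreeLTEquiv K (d+1)).symm.toEquiv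
  refine Set.Finite.subset (s := (Polynomial.degreeLT K (d+1) : Set K[X])) (Set.toFinite _) ?_
  rintro f ⟨hf, hd⟩
  simp only [SetLike.mem_coe, Polynomial.mem_degreeLT]
  rw [Polynomial.degree_eq_natDegree hf.ne_zero, hd]
  exact_mod_cast Nat.lt_succ_self d

variable (K) in
/-- monic polynomials of degree `d` -/
noncomputable def Mon (d : ℕ) : Finset K[X] := (finite_monicDeg (K := K) d).toFinset

lemma mem_Mon {d : ℕ} {f : K[X]} : f ∈ Mon K d ↔ f.Monic ∧ f.natDegree = d := by
  simp [Mon]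

lemma card_Mon (d : ℕ) : (Mon K d).card = Nat.card K ^ d := by
  have e1 : Nat.card {f : K[X] // f.Monic ∧ f.natDegree = d} = Nat.card K ^ d := by
    rw [Nat.card_congr ((Polynomial.monicEquivDegreeLT d).trans
      (Polynomial.degreeLTEquiv K d).toEquiv), Nat.card_fun, Nat.card_fin]
  rw [← e1, Mon, ← Set.ncard_eq_toFinset_card _ (finite_monicDeg (K := K) d), ← Nat.card_coe_set_eq]
  rfl

open Classical in
variable (K) in
/-- prime powers of degree `m` -/
noncomputable def PP (m : ℕ) : Finset (K[X] × ℕ) :=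
  (((Finset.range (m+1)).biUnion (Mon K)) ×ˢ Finset.range (m+1)).filter
    (fun x => Irreducible x.1 ∧ 0 < x.2 ∧ x.2 * x.1.natDegree = m)

lemma mem_PP {m : ℕ} {x : K[X] × ℕ} : x ∈ PP K m ↔
    x.1.Monic ∧ Irreducible x.1 ∧ 0 < x.2 ∧ x.2 * x.1.natDegree = m := by
  simp only [PP, Finset.mem_filter, Finset.mem_product, Finset.mem_biUnion, Finset.mem_range, mem_Mon]
  constructor
  · rintro ⟨⟨⟨a, ha, hm, hd⟩, hk⟩, h1, h2, h3⟩
    exact ⟨hm, h1, h2, h3⟩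
  · rintro ⟨hm, h1, h2, h3⟩
    have := h1.natDegree_pos
    refine ⟨⟨⟨x.1.natDegree, ?_, hm, rfl⟩, ?_⟩, h1, h2, h3⟩ <;> nlinarith

/-- von Mangoldt type sum -/
noncomputable def SS (χ : K[X] → ℂ) (m : ℕ) : ℂ :=
  ∑ x ∈ PP K m, (x.1.natDegree : ℂ) * χ (x.1 ^ x.2)

noncomputable def CC (χ : K[X] → ℂ) (d : ℕ) : ℂ := ∑ f ∈ Mon K d, χ f

open Classical in
lemma degree_sum (d : ℕ) (f : K[X]) (hf : f ∈ Mon K d) :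
    (d : ℂ) = ∑ m ∈ Finset.range (d+1), ∑ x ∈ PP K m,
      if x.1 ^ x.2 ∣ f then (x.1.natDegree : ℂ) else 0 := by
  obtain ⟨hfm, hfd⟩ := mem_Mon.1 hf
  have hf0 := hfm.ne_zero
  set N := UniqueFactorizationMonoid.normalizedFactors f with hN
  have hmem : ∀ P ∈ N, P.Monic ∧ Irreducible P := by
    intro P hP
    refine ⟨?_, UniqueFactorizationMonoid.irreducible_of_normalized_factor _ hP⟩
    have h1 := UniqueFactorizationMonoid.normalize_normalized_factor _ hP
    rw [← h1]
    exact Polynomial.monic_normalize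
      (UniqueFactorizationMonoid.irreducible_of_normalized_factor _ hP).ne_zero
  have hprod : N.prod = f := by
    have := UniqueFactorizationMonoid.prod_normalizedFactors_eq hf0
    rw [this, hfm.normalize_eq_self]
  have hdeg : d = ∑ P ∈ N.toFinset, N.count P * P.natDegree := by
    rw [← hfd, ← hprod, Polynomial.natDegree_multiset_prod_of_monic _ (fun P hP => (hmem P hP).1),
      Finset.sum_multiset_map_count]
    simp
  have hdvd : ∀ P : K[X], P.Monic → Irreducible P → ∀ k, P ^ k ∣ f ↔ k ≤ N.count P := by
    intro P hP hPi k
    rw [Multiset.le_count_iff_replicate_le, pow_dvd_iff_le_emultiplicity,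
      UniqueFactorizationMonoid.le_emultiplicity_iff_replicate_le_normalizedFactors hPi hf0,
      hP.normalize_eq_self]
  have hR : ∑ m ∈ Finset.range (d+1), ∑ x ∈ PP K m,
      (if x.1 ^ x.2 ∣ f then (x.1.natDegree : ℂ) else 0) =
      ∑ P ∈ N.toFinset, ∑ k ∈ Finset.Icc 1 (N.count P), (P.natDegree : ℂ) := by
    simp_rw [← Finset.sum_filter]
    rw [Finset.sum_sigma', Finset.sum_sigma']
    refine Finset.sum_bij' (fun y _ => ⟨y.2.1, y.2.2⟩) (fun z _ => ⟨z.2 * z.1.natDegree, (z.1, z.2)⟩)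
      ?_ ?_ ?_ ?_ ?_
    · rintro ⟨m, P, k⟩ h
      simp only [Finset.mem_sigma, Finset.mem_filter, mem_PP, Finset.mem_range] at h
      obtain ⟨h0, ⟨h1, h2, h3, h4⟩, h5⟩ := h
      rw [hdvd P h1 h2] at h5
      simp only [Finset.mem_sigma, Finset.mem_Icc, Multiset.mem_toFinset]
      exact ⟨Multiset.count_pos.1 (by omega), by omega, h5⟩
    · rintro ⟨P, k⟩ h
      simp only [Finset.mem_sigma, Finset.mem_Icc, Multiset.mem_toFinset] at h
      obtain ⟨h1, h2, h3⟩ := h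
      have h4 := hmem P h1
      have h5 := (hdvd P h4.1 h4.2 k).2 h3
      simp only [Finset.mem_sigma, Finset.mem_filter, mem_PP, Finset.mem_range]
      refine ⟨?_, ⟨h4.1, h4.2, by omega, trivial⟩, h5⟩
      have := Polynomial.natDegree_le_of_dvd h5 hf0
      rw [h4.1.natDegree_pow, hfd] at this
      omega
    · rintro ⟨m, P, k⟩ h
      simp only [Finset.mem_sigma, Finset.mem_filter, mem_PP, Finset.mem_range] at h
      obtain ⟨h0, ⟨h1, h2, h3, h4⟩, h5⟩ := h
      simp [h4]
    · rintro ⟨P, k⟩ h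
      rfl
    · rintro ⟨m, P, k⟩ h
      rfl
  rw [hR, hdeg]
  simp

lemma main_identity (χ : K[X] → ℂ) (hχ : ∀ f g : K[X], f.Monic → g.Monic → χ (f * g) = χ f * χ g)
    (d : ℕ) : (d : ℂ) * CC χ d = ∑ x ∈ Finset.HasAntidiagonal.antidiagonal d, SS χ x.1 * CC χ x.2 := by
  classical
  rw [Finset.Nat.sum_antidiagonal_eq_sum_range_succ (f := fun a b => SS χ a * CC χ b)]
  have key : ∀ m ∈ Finset.range (d+1), SS χ m * CC χ (d - m) =
      ∑ x ∈ PP K m, ∑ f ∈ Mon K d, if x.1 ^ x.2 ∣ f then (x.1.natDegree : ℂ) * χ f else 0 := by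
    intro m hm
    rw [Finset.mem_range] at hm
    rw [SS, Finset.sum_mul]
    refine Finset.sum_congr rfl fun x hx => ?_
    obtain ⟨h1, h2, h3, h4⟩ := mem_PP.1 hx
    rw [CC, Finset.mul_sum, ← Finset.sum_filter]
    have h5 : (x.1 ^ x.2).Monic := h1.pow _
    have h6 : (x.1 ^ x.2).natDegree = m := by rw [h1.natDegree_pow, h4]
    refine Finset.sum_bij (fun h _ => x.1 ^ x.2 * h) ?_ ?_ ?_ ?_
    · intro h hh
      obtain ⟨a, b⟩ := mem_Mon.1 hh
      rw [Finset.mem_filter, mem_Mon]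
      refine ⟨⟨h5.mul a, ?_⟩, dvd_mul_right _ _⟩
      rw [h5.natDegree_mul a, h6, b]; omega
    · intro a _ b _ hab
      exact mul_left_cancel₀ h5.ne_zero hab
    · intro f hf
      rw [Finset.mem_filter, mem_Mon] at hf
      obtain ⟨⟨a, b⟩, c, hc⟩ := hf
      have hcm : c.Monic := by
        rw [hc] at a; exact h5.of_mul_monic_left a
      refine ⟨c, ?_, hc.symm⟩
      rw [mem_Mon]
      refine ⟨hcm, ?_⟩
      rw [hc, h5.natDegree_mul hcm, h6] at b; omega
    · intro h hh
      rw [hχ _ _ h5 (mem_Mon.1 hh).1]; ring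
  rw [Finset.sum_congr rfl key, CC, Finset.mul_sum]
  rw [Finset.sum_congr rfl (fun f hf => by rw [degree_sum d f hf])]
  simp_rw [Finset.sum_mul, ite_mul, zero_mul]
  rw [Finset.sum_comm]
  refine Finset.sum_congr rfl fun m _ => ?_
  rw [Finset.sum_comm]

end D
/-- Abel mean of a sequence -/
def Abel (a : ℕ → ℂ) (r : ℂ) : Prop :=
  Tendsto (fun y : ℝ => (1 - (y : ℂ)) * ∑' m, a m * (y : ℂ) ^ m) (𝓝[<] 1) (𝓝 r)

lemma ev_Ioo : ∀ᶠ y : ℝ in 𝓝[<] 1, 0 < y ∧ y < 1 := by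
  have := Ioo_mem_nhdsLT (show (0:ℝ) < 1 by norm_num)
  filter_upwards [this] with y hy using hy

lemma summable_norm_bdd {a : ℕ → ℂ} {B : ℝ} (ha : ∀ m, ‖a m‖ ≤ B) {y : ℝ} (hy : 0 < y ∧ y < 1) :
    Summable (fun m => ‖a m * (y : ℂ) ^ m‖) := by
  refine Summable.of_nonneg_of_le (fun _ => norm_nonneg _) (fun m => ?_)
    ((summable_geometric_of_lt_one hy.1.le hy.2).mul_left B)
  rw [norm_mul, norm_pow, Complex.norm_real, Real.norm_of_nonneg hy.1.le]
  exact mul_le_mul_of_nonneg_right (ha m) (by have := hy.1; positivity)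

lemma summable_bdd {a : ℕ → ℂ} {B : ℝ} (ha : ∀ m, ‖a m‖ ≤ B) {y : ℝ} (hy : 0 < y ∧ y < 1) :
    Summable (fun m => a m * (y : ℂ) ^ m) := (summable_norm_bdd ha hy).of_norm

lemma Abel.sum {ι : Type*} (s : Finset ι) (c : ι → ℂ) (a : ι → ℕ → ℂ) (r : ι → ℂ) (B : ℝ)
    (hb : ∀ i ∈ s, ∀ m, ‖a i m‖ ≤ B) (h : ∀ i ∈ s, Abel (a i) (r i)) :
    Abel (fun m => ∑ i ∈ s, c i * a i m) (∑ i ∈ s, c i * r i) := by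
  have h1 := tendsto_finsetSum s (fun i hi => (h i hi).const_mul (c i))
  refine h1.congr' ?_
  filter_upwards [ev_Ioo] with y hy
  have : ∑' m, (∑ i ∈ s, c i * a i m) * (y : ℂ) ^ m = ∑ i ∈ s, c i * ∑' m, a i m * (y : ℂ) ^ m := by
    simp_rw [Finset.sum_mul, mul_assoc]
    rw [Summable.tsum_finsetSum (fun i hi => (summable_bdd (hb i hi) hy).mul_left (c i))]
    refine Finset.sum_congr rfl fun i hi => ?_
    rw [tsum_mul_left]
  rw [this, Finset.mul_sum]
  refine Finset.sum_congr rfl fun i _ => by ring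

instance : (𝓝[<] (1:ℝ)).NeBot := inferInstance

lemma Abel.unique {a : ℕ → ℂ} {r s : ℂ} (h : Abel a r) (h' : Abel a s) : r = s :=
  tendsto_nhds_unique h h'

lemma Abel.zero : Abel (fun _ => 0) 0 := by
  simp [Abel]

lemma Abel.re_nonneg {a : ℕ → ℂ} {r : ℂ} {B : ℝ} (hb : ∀ m, ‖a m‖ ≤ B) (h : Abel a r)
    (hn : ∀ m, 0 ≤ (a m).re) : 0 ≤ r.re := by
  have h1 := (Complex.continuous_re.tendsto r).comp h
  refine ge_of_tendsto h1 ?_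
  filter_upwards [ev_Ioo] with y hy
  have h2 : (1 - (y : ℂ)) = ((1 - y : ℝ) : ℂ) := by push_cast; ring
  simp only [Function.comp, h2, Complex.re_ofReal_mul]
  refine mul_nonneg (by linarith [hy.2]) ?_
  rw [Complex.re_tsum (summable_bdd hb hy)]
  refine tsum_nonneg fun m => ?_
  rw [← Complex.ofReal_pow, mul_comm, Complex.re_ofReal_mul]
  exact mul_nonneg (pow_nonneg hy.1.le _) (hn m)

lemma Abel.geom (θ : ℂ) (hθ : ‖θ‖ = 1) : Abel (fun m => θ ^ m) (if θ = 1 then 1 else 0) := by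
  have h1 : ∀ᶠ y : ℝ in 𝓝[<] 1, (1 - (y:ℂ)) * (1 - θ * y)⁻¹ =
      (1 - (y : ℂ)) * ∑' m, θ ^ m * (y : ℂ) ^ m := by
    filter_upwards [ev_Ioo] with y hy
    simp_rw [← mul_pow]
    rw [tsum_geometric_of_norm_lt_one]
    rw [norm_mul, hθ, one_mul, Complex.norm_real, Real.norm_of_nonneg hy.1.le]
    exact hy.2
  refine Tendsto.congr' h1 ?_
  split_ifs with h
  · subst h
    refine tendsto_const_nhds.congr' ?_
    filter_upwards [ev_Ioo] with y hy
    rw [one_mul, mul_inv_cancel₀]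
    rw [sub_ne_zero]
    exact_mod_cast hy.2.ne'
  · have hc : ContinuousAt (fun y : ℝ => (1 - (y:ℂ)) * (1 - θ * y)⁻¹) 1 := by
      refine ContinuousAt.mul (by fun_prop) (ContinuousAt.inv₀ (by fun_prop) ?_)
      simp only [Complex.ofReal_one, mul_one]
      exact sub_ne_zero.2 (Ne.symm h)
    have := hc.tendsto
    simp only [Complex.ofReal_one, sub_self, zero_mul] at this
    exact this.mono_left nhdsWithin_le_nhds

lemma Abel.of_summable {a : ℕ → ℂ} (ha : Summable (fun m => ‖a m‖)) : Abel a 0 := by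
  rw [Abel, tendsto_zero_iff_norm_tendsto_zero]
  have h0 : Tendsto (fun y : ℝ => (1 - y) * ∑' m, ‖a m‖) (𝓝[<] 1) (𝓝 0) := by
    have : ContinuousAt (fun y : ℝ => (1 - y) * ∑' m, ‖a m‖) 1 := by fun_prop
    have := this.tendsto
    simp only [sub_self, zero_mul] at this
    exact this.mono_left nhdsWithin_le_nhds
  refine tendsto_of_tendsto_of_tendsto_of_le_of_le' tendsto_const_nhds h0
    (Eventually.of_forall fun _ => norm_nonneg _) ?_
  filter_upwards [ev_Ioo] with y hy
  have h2 : (1 - (y : ℂ)) = ((1 - y : ℝ) : ℂ) := by push_cast; ring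
  rw [norm_mul, h2, Complex.norm_real, Real.norm_of_nonneg (by linarith [hy.2])]
  refine mul_le_mul_of_nonneg_left ?_ (by linarith [hy.2])
  have hle : ∀ m, ‖a m * (y:ℂ) ^ m‖ ≤ ‖a m‖ := by
    intro m
    rw [norm_mul, norm_pow, Complex.norm_real, Real.norm_of_nonneg hy.1.le]
    exact mul_le_of_le_one_right (norm_nonneg _) (pow_le_one₀ hy.1.le hy.2.le)
  have hs : Summable (fun m => ‖a m * (y:ℂ) ^ m‖) :=
    Summable.of_nonneg_of_le (fun _ => norm_nonneg _) hle ha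
  exact (norm_tsum_le_tsum_norm hs).trans (hs.tsum_le_tsum hle ha)

lemma hasSum_poly (L : ℂ[X]) (y : ℂ) : HasSum (fun d => L.coeff d * y ^ d) (L.eval y) := by
  rw [Polynomial.eval_eq_sum_range]
  refine hasSum_sum_of_ne_finset_zero fun b hb => ?_
  rw [Polynomial.coeff_eq_zero_of_natDegree_lt, zero_mul]
  simp at hb; omega

lemma summable_poly (L : ℂ[X]) (y : ℂ) : Summable (fun d => ‖L.coeff d * y ^ d‖) := by
  refine summable_of_ne_finset_zero (s := Finset.range (L.natDegree + 1)) fun b hb => ?_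
  rw [Polynomial.coeff_eq_zero_of_natDegree_lt, zero_mul, norm_zero]
  simp at hb; omega

lemma Abel.of_poly {a : ℕ → ℂ} {B : ℝ} (hb : ∀ m, ‖a m‖ ≤ B) (L : ℂ[X]) (hL : L ≠ 0)
    (h : ∀ d : ℕ, (d : ℂ) * L.coeff d =
      ∑ x ∈ Finset.HasAntidiagonal.antidiagonal d, a x.1 * L.coeff x.2) :
    Abel a (-(L.rootMultiplicity 1 : ℂ)) := by
  set k := L.rootMultiplicity 1 with hk
  obtain ⟨G, hG, hGd⟩ := Polynomial.exists_eq_pow_rootMultiplicity_mul_and_not_dvd L hL 1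
  rw [← hk] at hG
  have hG1 : G.eval 1 ≠ 0 := by
    rwa [Polynomial.dvd_iff_isRoot] at hGd
  have hprod : ∀ y : ℝ, 0 < y ∧ y < 1 → (∑' m, a m * (y : ℂ) ^ m) * L.eval (y:ℂ) =
      y * (derivative L).eval (y:ℂ) := by
    intro y hy
    have h1 := tsum_mul_tsum_eq_tsum_sum_antidiagonal_of_summable_norm
      (summable_norm_bdd hb hy) (summable_poly L y)
    rw [(hasSum_poly L y).tsum_eq] at h1
    rw [h1]
    have h2 := (hasSum_poly (X * derivative L) y).tsum_eq
    rw [eval_mul, eval_X] at h2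
    rw [← h2]
    refine tsum_congr fun d => ?_
    have h3 : (X * derivative L).coeff d = d * L.coeff d := by
      cases d with
      | zero => simp
      | succ n => rw [coeff_X_mul, coeff_derivative]; push_cast; ring
    rw [h3, h d, Finset.sum_mul]
    refine Finset.sum_congr rfl fun x hx => ?_
    rw [← Finset.HasAntidiagonal.mem_antidiagonal.1 hx, pow_add]; ring
  have hGc : ContinuousAt (fun y : ℝ => G.eval (y:ℂ)) 1 := by fun_prop
  have hGne : ∀ᶠ y : ℝ in 𝓝[<] 1, G.eval (y:ℂ) ≠ 0 :=
    (hGc.eventually_ne (by simpa using hG1)).filter_mono nhdsWithin_le_nhds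
  have hc : ContinuousAt (fun y : ℝ => -(k:ℂ) * y + (1 - (y:ℂ)) * y * (derivative G).eval (y:ℂ) *
      (G.eval (y:ℂ))⁻¹) 1 := by
    refine ContinuousAt.add (by fun_prop) (ContinuousAt.mul (by fun_prop)
      (ContinuousAt.inv₀ hGc (by simpa using hG1)))
  have ht := hc.tendsto
  simp only [Complex.ofReal_one, sub_self, zero_mul, mul_one, add_zero] at ht
  refine (ht.mono_left nhdsWithin_le_nhds).congr' ?_
  filter_upwards [ev_Ioo, hGne] with y hy hGy
  have hy1 : (y:ℂ) - 1 ≠ 0 := sub_ne_zero.2 (by exact_mod_cast hy.2.ne)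
  have hLy : L.eval (y:ℂ) = ((y:ℂ) - 1) ^ k * G.eval (y:ℂ) := by
    rw [hG]; simp
  have hLd : ((y:ℂ) - 1) * (derivative L).eval (y:ℂ) = ((y:ℂ) - 1) ^ k *
      (k * G.eval (y:ℂ) + ((y:ℂ) - 1) * (derivative G).eval (y:ℂ)) := by
    rw [hG]
    cases k with
    | zero => simp
    | succ n => simp [derivative_pow]; ring
  have hLne : L.eval (y:ℂ) ≠ 0 := by rw [hLy]; exact mul_ne_zero (pow_ne_zero _ hy1) hGy
  have hp := hprod y hy
  refine mul_right_cancel₀ hLne ?_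
  rw [mul_assoc (1 - (y:ℂ)) (∑' m, a m * (y:ℂ) ^ m), hp, hLy]
  have : (1 - (y:ℂ)) * (y * (derivative L).eval (y:ℂ)) =
    - y * (((y:ℂ) - 1) * (derivative L).eval (y:ℂ)) := by ring
  rw [this, hLd]
  field_simp
  ring

section D3
variable {K : Type} [Field K] [Fintype K]

lemma mulChar_norm (ψ : MulChar K ℂ) {x : K} (hx : x ≠ 0) : ‖ψ x‖ = 1 := by
  have h1 : (ψ x) ^ (Fintype.card K - 1) = 1 := by
    rw [← map_pow, FiniteField.pow_card_sub_one_eq_one x hx, map_one]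
  have : Fintype.card K - 1 ≠ 0 := by
    have := Fintype.one_lt_card (α := K); omega
  exact Complex.norm_eq_one_of_pow_eq_one h1 this

lemma mulChar_norm_le (ψ : MulChar K ℂ) (x : K) : ‖ψ x‖ ≤ 1 := by
  by_cases hx : x = 0
  · rw [hx, MulChar.map_zero]; simp
  · exact (mulChar_norm ψ hx).le

/-- the completely multiplicative functions we use -/
noncomputable def XX (ψ : K → MulChar K ℂ) (θ : ℂ) (f : K[X]) : ℂ :=
  θ ^ f.natDegree * ∏ e, ψ e (f.eval e)

lemma XX_mul (ψ : K → MulChar K ℂ) (θ : ℂ) (f g : K[X]) (hf : f.Monic) (hg : g.Monic) :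
    XX ψ θ (f * g) = XX ψ θ f * XX ψ θ g := by
  simp only [XX, hf.natDegree_mul hg, eval_mul, map_mul, Finset.prod_mul_distrib, pow_add]
  ring

lemma XX_norm_le (ψ : K → MulChar K ℂ) (θ : ℂ) (hθ : ‖θ‖ = 1) (f : K[X]) : ‖XX ψ θ f‖ ≤ 1 := by
  rw [XX, norm_mul, norm_pow, hθ, one_pow, one_mul, norm_prod]
  exact Finset.prod_le_one (fun _ _ => norm_nonneg _) (fun e _ => mulChar_norm_le _ _)

lemma Mon_zero : Mon K 0 = {1} := by
  ext f
  rw [mem_Mon, Finset.mem_singleton]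
  constructor
  · rintro ⟨h1, h2⟩; exact h1.natDegree_eq_zero.1 h2
  · rintro rfl; exact ⟨monic_one, natDegree_one⟩

lemma CC_zero (ψ : K → MulChar K ℂ) (θ : ℂ) : CC (XX ψ θ) 0 = 1 := by
  rw [CC, Mon_zero, Finset.sum_singleton, XX]; simp

lemma CC_vanish (ψ : K → MulChar K ℂ) (θ : ℂ) (e₀ : K) (h : ψ e₀ ≠ 1) (d : ℕ)
    (hd : Fintype.card K ≤ d) : CC (XX ψ θ) d = 0 := by
  classical
  obtain ⟨y, hy⟩ := MulChar.ne_one_iff.1 h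
  have hQ := Fintype.one_lt_card (α := K)
  set ℓ : K[X] := 1 - (X - C e₀) ^ (Fintype.card K - 1) with hℓ
  have hℓd : ℓ.degree < d := by
    refine lt_of_le_of_lt (b := ((Fintype.card K - 1 : ℕ) : WithBot ℕ)) ?_ (by exact_mod_cast (by omega))
    refine (degree_sub_le _ _).trans (max_le ?_ ?_)
    · rw [degree_one]; exact_mod_cast Nat.zero_le _
    · rw [degree_pow, degree_X_sub_C]; simp
  have hℓ0 : ℓ.eval e₀ = 1 := by simp [hℓ]; omega
  have hℓ1 : ∀ e, e ≠ e₀ → ℓ.eval e = 0 := by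
    intro e he
    simp only [hℓ, eval_sub, eval_one, eval_pow, eval_X, eval_C]
    rw [FiniteField.pow_card_sub_one_eq_one _ (sub_ne_zero.2 he), sub_self]
  have key : ∀ (c : K) (f : K[X]), f ∈ Mon K d → f + C c * ℓ ∈ Mon K d := by
    intro c f hf
    rw [mem_Mon] at hf ⊢
    have hdeg : f.degree = d := by rw [degree_eq_natDegree hf.1.ne_zero, hf.2]
    have hlt : (C c * ℓ).degree < f.degree := by
      rw [hdeg]; exact lt_of_le_of_lt (by rw [← smul_eq_C_mul]; exact degree_smul_le c ℓ) hℓd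
    refine ⟨hf.1.add_of_left hlt, ?_⟩
    rw [natDegree_add_eq_left_of_degree_lt hlt, hf.2]
  have hsum : CC (XX ψ θ) d = ψ e₀ y * CC (XX ψ θ) d := by
    conv_rhs => rw [CC, Finset.mul_sum]
    rw [CC]
    symm
    refine Finset.sum_bij' (fun f _ => f + C ((y - 1) * f.eval e₀) * ℓ)
      (fun f _ => f + C (((y⁻¹ : Kˣ) - 1) * f.eval e₀) * ℓ) (fun f hf => key _ f hf)
      (fun f hf => key _ f hf) ?_ ?_ ?_
    · intro f hf
      simp only [eval_add, eval_mul, eval_C, hℓ0]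
      have : ((y - 1) * eval e₀ f) + ((((y⁻¹ : Kˣ) : K) - 1) * (eval e₀ f + (y - 1) * eval e₀ f * 1)) = 0 := by
        have hyy : ((y⁻¹ : Kˣ) : K) * y = 1 := by simp
        linear_combination (eval e₀ f) * hyy
      rw [add_assoc, ← add_mul, ← C_add, this]; simp
    · intro f hf
      simp only [eval_add, eval_mul, eval_C, hℓ0]
      have : ((((y⁻¹ : Kˣ) : K) - 1) * eval e₀ f) + (((y : K) - 1) * (eval e₀ f + (((y⁻¹ : Kˣ) : K) - 1) * eval e₀ f * 1)) = 0 := by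
        have hyy : ((y⁻¹ : Kˣ) : K) * y = 1 := by simp
        linear_combination (eval e₀ f) * hyy
      rw [add_assoc, ← add_mul, ← C_add, this]; simp
    · intro f hf
      have h2 := (mem_Mon.1 (key ((y - 1) * f.eval e₀) f hf)).2
      have h3 := (mem_Mon.1 hf).2
      rw [XX, XX, h2, h3]
      rw [← Finset.mul_prod_erase Finset.univ _ (Finset.mem_univ e₀),
        ← Finset.mul_prod_erase Finset.univ (fun e => ψ e (eval e (f + _))) (Finset.mem_univ e₀)]
      have h4 : ∏ e ∈ Finset.univ.erase e₀, ψ e (eval e (f + C ((y - 1) * f.eval e₀) * ℓ)) =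
          ∏ e ∈ Finset.univ.erase e₀, ψ e (eval e f) := by
        refine Finset.prod_congr rfl fun e he => ?_
        rw [eval_add, eval_mul, hℓ1 e (Finset.ne_of_mem_erase he)]; simp
      rw [h4]
      have h5 : eval e₀ (f + C ((y - 1) * f.eval e₀) * ℓ) = y * f.eval e₀ := by
        rw [eval_add, eval_mul, hℓ0, eval_C]; ring
      rw [h5, map_mul]; ring
  have : (1 - ψ e₀ y) * CC (XX ψ θ) d = 0 := by linear_combination hsum
  rcases mul_eq_zero.1 this with h | h
  · exact absurd (sub_eq_zero.1 h).symm hy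
  · exact h

lemma SS_zero (χ : K[X] → ℂ) : SS χ 0 = 0 := by
  refine Finset.sum_eq_zero fun x hx => ?_
  obtain ⟨h1, h2, h3, h4⟩ := mem_PP.1 hx
  have := h2.natDegree_pos
  exfalso; nlinarith

lemma SS_one (m : ℕ) (hm : 0 < m) : SS (fun _ : K[X] => (1:ℂ)) m = (Fintype.card K : ℂ) ^ m := by
  have hC : ∀ d, CC (fun _ : K[X] => (1:ℂ)) d = (Fintype.card K : ℂ) ^ d := by
    intro d; simp [CC, card_Mon]
  induction m using Nat.strong_induction_on with
  | _ m ih =>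
    have h := main_identity (K := K) (fun _ => (1:ℂ)) (by simp) m
    rw [Finset.Nat.sum_antidiagonal_eq_sum_range_succ (f := fun a b => SS (fun _ : K[X] => (1:ℂ)) a *
      CC (fun _ : K[X] => (1:ℂ)) b), Finset.sum_range_succ, hC] at h
    simp only [Nat.sub_self, hC, pow_zero, mul_one] at h
    obtain ⟨n, rfl⟩ : ∃ n, m = n + 1 := ⟨m - 1, by omega⟩
    rw [Finset.sum_range_succ'] at h
    simp only [SS_zero, zero_mul, add_zero] at h
    rw [Finset.sum_congr rfl (g := fun _ => (Fintype.card K : ℂ) ^ (n+1))] at h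
    · rw [Finset.sum_const, Finset.card_range] at h
      simp at h
      linear_combination -h
    · intro k hk
      rw [Finset.mem_range] at hk
      rw [ih (k+1) (by omega) (by omega), ← pow_add]
      congr 1; omega

lemma SS_norm_le (χ : K[X] → ℂ) (hχ : ∀ f, ‖χ f‖ ≤ 1) (m : ℕ) :
    ‖SS χ m‖ ≤ (Fintype.card K : ℝ) ^ m := by
  rcases Nat.eq_zero_or_pos m with rfl | hm
  · rw [SS_zero]; simp
  have h1 : (∑ x ∈ PP K m, (x.1.natDegree : ℝ)) = (Fintype.card K : ℝ) ^ m := by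
    have := SS_one (K := K) m hm
    rw [SS] at this
    simp only [mul_one] at this
    exact_mod_cast this
  rw [← h1, SS]
  refine (norm_sum_le _ _).trans (Finset.sum_le_sum fun x _ => ?_)
  rw [norm_mul, Complex.norm_natCast]
  exact mul_le_of_le_one_right (Nat.cast_nonneg _) (hχ _)

/-- normalised sums -/
noncomputable def AA (χ : K[X] → ℂ) (m : ℕ) : ℂ := SS χ m / (Fintype.card K : ℂ) ^ m

lemma AA_norm_le (χ : K[X] → ℂ) (hχ : ∀ f, ‖χ f‖ ≤ 1) (m : ℕ) : ‖AA χ m‖ ≤ 1 := by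
  have : (0:ℝ) < Fintype.card K := by exact_mod_cast Fintype.card_pos
  rw [AA, norm_div, norm_pow, Complex.norm_natCast, div_le_one (by positivity)]
  exact SS_norm_le χ hχ m

lemma Abel_nontrivial (ψ : K → MulChar K ℂ) (θ : ℂ) (hθ : ‖θ‖ = 1) (e₀ : K) (h : ψ e₀ ≠ 1) :
    ∃ k : ℕ, Abel (AA (XX ψ θ)) (-(k : ℂ)) := by
  set Q := Fintype.card K with hQ
  have hQ0 : (Q : ℂ) ≠ 0 := by exact_mod_cast Fintype.card_ne_zero
  set L : ℂ[X] := ∑ d ∈ Finset.range Q, C (CC (XX ψ θ) d / (Q:ℂ) ^ d) * X ^ d with hL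
  have hc : ∀ d, L.coeff d = CC (XX ψ θ) d / (Q:ℂ) ^ d := by
    intro d
    simp only [hL, finsetSum_coeff, coeff_C_mul, coeff_X_pow, mul_ite, mul_one, mul_zero]
    rw [Finset.sum_ite_eq]
    split_ifs with hd
    · rfl
    · rw [CC_vanish ψ θ e₀ h d (by simpa using hd), zero_div]
  refine ⟨L.rootMultiplicity 1, Abel.of_poly (B := 1) (AA_norm_le _ (XX_norm_le ψ θ hθ)) L ?_ ?_⟩
  · intro h0
    have := hc 0
    rw [h0, CC_zero] at this
    simp at this
  · intro d
    rw [hc, mul_div_assoc', main_identity _ (XX_mul ψ θ), Finset.sum_div]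
    refine Finset.sum_congr rfl fun x hx => ?_
    rw [hc, AA, ← Finset.HasAntidiagonal.mem_antidiagonal.1 hx, pow_add]
    field_simp
    simp [hQ]

lemma Abel_trivial (θ : ℂ) (hθ : ‖θ‖ = 1) :
    Abel (AA (XX (fun _ : K => 1) θ)) (if θ = 1 then 1 else 0) := by
  classical
  set Q := Fintype.card K with hQ
  have hQ1 : 1 < Q := Fintype.one_lt_card
  have hQ0 : (Q : ℂ) ≠ 0 := by exact_mod_cast (by omega : Q ≠ 0)
  set b : ℕ → ℂ := fun m => θ ^ m - AA (XX (fun _ : K => 1) θ) m with hb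
  have hbb : ∀ m, ‖b m‖ ≤ Q * ((1:ℝ) / Q) ^ m := by
    intro m
    rcases Nat.eq_zero_or_pos m with rfl | hm
    · simp only [hb, AA, SS_zero]; simp; exact_mod_cast hQ1.le
    have e1 : b m = (∑ x ∈ PP K m, (x.1.natDegree : ℂ) * (θ ^ m - XX (fun _ : K => 1) θ (x.1 ^ x.2))) /
        (Q:ℂ) ^ m := by
      simp only [hb, AA, SS, mul_sub, Finset.sum_sub_distrib, sub_div]
      congr 1
      rw [← Finset.sum_mul]
      have := SS_one (K := K) m hm
      rw [SS] at this
      simp only [mul_one] at this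
      rw [this, ← hQ]
      field_simp
    rw [e1, norm_div, norm_pow, Complex.norm_natCast, one_div, inv_pow, ← div_eq_mul_inv]
    have hQr : (0:ℝ) < Q := by exact_mod_cast (by omega : 0 < Q)
    refine div_le_div_of_nonneg_right ?_ (by positivity)
    have e2 : ∑ x ∈ PP K m, (x.1.natDegree : ℂ) * (θ ^ m - XX (fun _ : K => 1) θ (x.1 ^ x.2)) =
        ∑ x ∈ (Finset.univ : Finset K).image (fun e => ((X - C e : K[X]), m)),
          (x.1.natDegree : ℂ) * (θ ^ m - XX (fun _ : K => 1) θ (x.1 ^ x.2)) := by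
      symm
      refine Finset.sum_subset ?_ ?_
      · intro x hx
        obtain ⟨e, _, rfl⟩ := Finset.mem_image.1 hx
        rw [mem_PP]
        exact ⟨monic_X_sub_C e, irreducible_X_sub_C e, hm, by simp⟩
      · intro x hx hx'
        obtain ⟨h1, h2, h3, h4⟩ := mem_PP.1 hx
        have : ∀ e, x.1.eval e ≠ 0 := by
          intro e he
          apply hx'
          rw [Finset.mem_image]
          have h5 : X - C e ∣ x.1 := dvd_iff_isRoot.2 he
          have h6 : X - C e = x.1 :=
            eq_of_monic_of_associated (monic_X_sub_C e) h1
              ((irreducible_X_sub_C e).associated_of_dvd h2 h5)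
          refine ⟨e, Finset.mem_univ _, ?_⟩
          rw [← h6] at h4
          simp at h4
          exact Prod.ext h6 h4.symm
        rw [XX, h1.natDegree_pow, h4, Finset.prod_eq_one, mul_one, sub_self, mul_zero]
        intro e _
        rw [MulChar.one_apply (by rw [eval_pow]; exact (pow_ne_zero _ (this e)).isUnit)]
    rw [e2]
    refine (norm_sum_le _ _).trans ?_
    refine (Finset.sum_le_card_nsmul _ _ 1 ?_).trans ?_
    · intro x hx
      obtain ⟨e, _, rfl⟩ := Finset.mem_image.1 hx
      simp only [natDegree_X_sub_C, Nat.cast_one, one_mul]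
      have e3 : XX (fun _ : K => 1) θ ((X - C e) ^ m) = 0 := by
        rw [XX, Finset.prod_eq_zero (Finset.mem_univ e), mul_zero]
        rw [eval_pow, eval_sub, eval_X, eval_C, sub_self, zero_pow hm.ne', MulChar.map_zero]
      rw [e3, sub_zero, norm_pow, hθ, one_pow]
    · rw [nsmul_eq_mul, mul_one]
      exact_mod_cast Finset.card_image_le
  have hsum : Summable (fun m => ‖b m‖) := by
    refine Summable.of_nonneg_of_le (fun _ => norm_nonneg _) hbb (Summable.mul_left _ ?_)
    refine summable_geometric_of_lt_one (by positivity) ?_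
    rw [div_lt_one (by exact_mod_cast (by omega : 0 < Q))]
    exact_mod_cast hQ1
  have hB : ∀ m, ‖b m‖ ≤ 2 := by
    intro m
    refine (norm_sub_le _ _).trans ?_
    rw [norm_pow, hθ, one_pow]
    linarith [AA_norm_le _ (XX_norm_le (fun _ : K => (1 : MulChar K ℂ)) θ hθ) m]
  have h1 := Abel.of_summable hsum
  have h2 := Abel.geom θ hθ
  have h3 := Abel.sum (Finset.univ : Finset (Fin 2)) ![1, -1] ![fun m => θ ^ m, b]
    ![if θ = 1 then 1 else 0, 0] 2 (by
      intro i _ m; fin_cases i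
      · simp [hθ]
      · simpa using hB m) (by
      intro i _; fin_cases i
      · exact h2
      · exact h1)
  convert h3 using 2
  · simp [hb]
  · simp

lemma Abel_nontrivial' (ψ : K → MulChar K ℂ) (θ : ℂ) (hθ : ‖θ‖ = 1) (e₀ : K)
    (h : (ψ e₀) ^ 2 ≠ 1) : Abel (AA (XX ψ θ)) 0 := by
  have h1 : ψ e₀ ≠ 1 := by rintro h1; rw [h1] at h; simp at h
  have hθ2 : ‖θ ^ 2‖ = 1 := by rw [norm_pow, hθ, one_pow]
  obtain ⟨k1, hk1⟩ := Abel_nontrivial ψ θ hθ e₀ h1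
  obtain ⟨k2, hk2⟩ := Abel_nontrivial (fun e => (ψ e) ^ 2) (θ ^ 2) hθ2 e₀ h
  have h0 := Abel_trivial (K := K) 1 (by simp)
  simp only [if_true] at h0
  have h3 := Abel.sum (Finset.univ : Finset (Fin 3)) ![3, 4, 1]
    ![AA (XX (fun _ : K => 1) 1), AA (XX ψ θ), AA (XX (fun e => (ψ e) ^ 2) (θ ^ 2))]
    ![1, -(k1:ℂ), -(k2:ℂ)] 1 (by
      intro i _ m; fin_cases i
      · exact AA_norm_le _ (XX_norm_le _ _ (by simp)) m
      · exact AA_norm_le _ (XX_norm_le _ _ hθ) m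
      · exact AA_norm_le _ (XX_norm_le _ _ hθ2) m) (by
      intro i _; fin_cases i
      · exact h0
      · exact hk1
      · exact hk2)
  have h4 := Abel.re_nonneg (B := 8) (by
    intro m
    rw [Fin.sum_univ_three]
    simp only [Matrix.cons_val_zero, Matrix.cons_val_one, Matrix.cons_val]
    have a1 := AA_norm_le _ (XX_norm_le (fun _ : K => (1 : MulChar K ℂ)) 1 (by simp)) m
    have a2 := AA_norm_le _ (XX_norm_le ψ θ hθ) m
    have a3 := AA_norm_le _ (XX_norm_le (fun e => (ψ e) ^ 2) (θ ^ 2) hθ2) m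
    refine (norm_add₃_le).trans ?_
    simp only [norm_mul, norm_one, Complex.norm_ofNat]
    linarith) h3 (by
    intro m
    have : ∑ i : Fin 3, (![3, 4, 1] : Fin 3 → ℂ) i *
      (![AA (XX (fun _ : K => 1) 1), AA (XX ψ θ), AA (XX (fun e => (ψ e) ^ 2) (θ ^ 2))] : Fin 3 → ℕ → ℂ) i m
      = ((((Fintype.card K : ℝ) ^ m)⁻¹ : ℝ) : ℂ) * ∑ x ∈ PP K m, ((x.1.natDegree : ℝ) : ℂ) *
        (3 * XX (fun _ : K => 1) 1 (x.1 ^ x.2) + 4 * XX ψ θ (x.1 ^ x.2) +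
          XX (fun e => (ψ e) ^ 2) (θ ^ 2) (x.1 ^ x.2)) := by
      rw [Fin.sum_univ_three]
      simp only [Matrix.cons_val_zero, Matrix.cons_val_one, Matrix.cons_val, AA, SS, mul_add,
        Finset.sum_add_distrib]
      push_cast
      simp only [div_eq_mul_inv, Finset.sum_mul, Finset.mul_sum]
      congr 1
      · congr 1 <;> refine Finset.sum_congr rfl fun x _ => by ring
      · refine Finset.sum_congr rfl fun x _ => by ring
    rw [this, Complex.re_ofReal_mul]
    refine mul_nonneg (by positivity) ?_
    rw [Complex.re_sum]
    refine Finset.sum_nonneg fun x _ => ?_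
    rw [Complex.re_ofReal_mul]
    refine mul_nonneg (by positivity) ?_
    set f := x.1 ^ x.2
    have e2 : XX (fun e => (ψ e) ^ 2) (θ ^ 2) f = (XX ψ θ f) ^ 2 := by
      simp only [XX, mul_pow, ← pow_mul, Finset.prod_pow]
      rw [mul_comm 2, ← Finset.prod_pow]
      congr 1
      refine Finset.prod_congr rfl fun e _ => ?_
      rw [MulChar.pow_apply' _ two_ne_zero]
    rw [e2]
    by_cases hz : ∃ e, f.eval e = 0
    · obtain ⟨e, he⟩ := hz
      have : ∀ (ψ : K → MulChar K ℂ) θ, XX ψ θ f = 0 := by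
        intro ψ θ
        rw [XX, Finset.prod_eq_zero (Finset.mem_univ e), mul_zero]
        rw [he, MulChar.map_zero]
      rw [this, this]; simp
    · push Not at hz
      have e1 : XX (fun _ : K => 1) 1 f = 1 := by
        rw [XX, Finset.prod_eq_one, one_pow, mul_one]
        intro e _
        rw [MulChar.one_apply (hz e).isUnit]
      have e3 : ‖XX ψ θ f‖ = 1 := by
        rw [XX, norm_mul, norm_pow, hθ, one_pow, one_mul, norm_prod, Finset.prod_eq_one]
        intro e _
        exact mulChar_norm _ (hz e)
      rw [e1]
      generalize XX ψ θ f = z at e3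
      have e4 : z.re ^ 2 + z.im ^ 2 = 1 := by
        have := Complex.sq_norm z
        rw [e3, Complex.normSq_apply] at this
        nlinarith
      simp [sq]
      nlinarith [sq_nonneg (z.re + 1)])
  rw [Fin.sum_univ_three] at h4
  simp at h4
  have : k1 = 0 := by
    by_contra hne
    have : (1:ℝ) ≤ k1 := by exact_mod_cast Nat.one_le_iff_ne_zero.2 hne
    have : (0:ℝ) ≤ k2 := Nat.cast_nonneg _
    linarith
  rw [this] at hk1
  simpa using hk1
end D3
section D4
variable {K : Type} [Field K] [Fintype K]

lemma eq_one_of_geom_ne_zero {p : ℕ} {z : ℂ} (hz : z ^ p = 1) (h : ∑ b : Fin p, z ^ (b : ℕ) ≠ 0) :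
    z = 1 := by
  rw [Fin.sum_univ_eq_sum_range (fun b => z ^ b) p] at h
  have := mul_geom_sum z p
  rw [hz, sub_self] at this
  rcases mul_eq_zero.1 this with h1 | h1
  · exact sub_eq_zero.1 h1
  · exact absurd h1 h

lemma mulChar_apply_pow (η : MulChar K ℂ) {p : ℕ} (hη : η ^ p = 1) {x : K} (hx : x ≠ 0) :
    (η x) ^ p = 1 := by
  have : (η ^ p) (Units.mk0 x hx : Kˣ) = 1 := by rw [hη, MulChar.one_apply_coe]
  rw [MulChar.pow_apply_coe] at this
  exact this

lemma sum_char_ne_zero (η : MulChar K ℂ) {p : ℕ} (hη : η ^ p = 1) (x : K)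
    (h : ∑ b : Fin p, (η ^ (b : ℕ)) x ≠ 0) : x ≠ 0 ∧ η x = 1 := by
  have hx : x ≠ 0 := by
    rintro rfl
    apply h
    exact Finset.sum_eq_zero fun b _ => MulChar.map_zero _
  refine ⟨hx, eq_one_of_geom_ne_zero (mulChar_apply_pow η hη hx) ?_⟩
  convert h using 2 with b _
  exact (MulChar.pow_apply_coe η b (Units.mk0 x hx)).symm

theorem exists_irreducible (p : ℕ) (hp : p.Prime) (hp2 : p ≠ 2) (η : MulChar K ℂ)
    (hη : orderOf η = p) : ∃ f : K[X], f.Monic ∧ Irreducible f ∧ ¬ p ∣ f.natDegree ∧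
      (∀ e, f.eval e ≠ 0) ∧ (∀ e, e ≠ 0 → η (f.eval e) = 1) ∧ η (f.eval 0) ≠ 1 := by
  classical
  have hηp : η ^ p = 1 := by rw [← hη]; exact pow_orderOf_eq_one η
  have hη1 : η ≠ 1 := by
    rintro rfl; rw [orderOf_one] at hη; exact hp.one_lt.ne hη
  obtain ⟨y0, hy0⟩ := MulChar.ne_one_iff.1 hη1
  haveI : NeZero p := ⟨hp.ne_zero⟩
  obtain ⟨θ, hθ⟩ : ∃ θ : ℂ, IsPrimitiveRoot θ p := ⟨_, Complex.isPrimitiveRoot_exp p hp.ne_zero⟩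
  have hθn : ∀ j : ℕ, ‖θ ^ j‖ = 1 := by
    intro j; rw [norm_pow, hθ.norm'_eq_one hp.ne_zero, one_pow]
  set v : K → K := fun e => if e = 0 then ((y0⁻¹ : Kˣ) : K) else 1 with hv
  have hv0 : ∀ e, v e ≠ 0 := by
    intro e; simp only [hv]; split_ifs <;> simp
  set ψ : (K → Fin p) → K → MulChar K ℂ := fun b e => η ^ (b e : ℕ) with hψ
  set c : (K → Fin p) × Fin p → ℂ := fun x => (θ ^ ((x.2 : ℕ) * (p - 1))) * ∏ e, ψ x.1 e (v e) with hc
  set r : (K → Fin p) × Fin p → ℂ := fun x => if x = 0 then 1 else 0 with hr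
  have hpow : ∀ b : Fin p, b ≠ 0 → (η ^ (b : ℕ)) ^ 2 ≠ 1 := by
    intro b hb h
    rw [← pow_mul] at h
    have h1 := orderOf_dvd_of_pow_eq_one h
    rw [hη] at h1
    rcases hp.dvd_mul.1 h1 with h2 | h2
    · have h3 : (b : ℕ) ≠ 0 := fun h => hb (Fin.ext h)
      exact absurd (Nat.le_of_dvd (Nat.pos_of_ne_zero h3) h2) (by have := b.2; omega)
    · exact hp2 ((Nat.prime_dvd_prime_iff_eq hp Nat.prime_two).1 h2)
  have hAbel : ∀ x ∈ (Finset.univ : Finset ((K → Fin p) × Fin p)),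
      Abel (AA (XX (ψ x.1) (θ ^ (x.2 : ℕ)))) (r x) := by
    rintro ⟨b, j⟩ _
    by_cases hb : b = 0
    · subst hb
      have h1 := Abel_trivial (K := K) (θ ^ (j : ℕ)) (hθn j)
      have h2 : ψ (0 : K → Fin p) = fun _ => 1 := by
        funext e; simp [hψ]
      simp only [h2]
      convert h1 using 1
      simp only [hr]
      have : ((0 : K → Fin p), j) = 0 ↔ θ ^ (j : ℕ) = 1 := by
        rw [hθ.pow_eq_one_iff_dvd]
        constructor
        · intro h
          have : j = 0 := congrArg Prod.snd h
          rw [this]; simp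
        · intro h
          have : j = 0 := Fin.ext (Nat.eq_zero_of_dvd_of_lt h j.2)
          rw [this]; rfl
      simp only [this]
    · have h1 : ∃ e, b e ≠ 0 := by
        by_contra h; push Not at h; exact hb (funext h)
      obtain ⟨e, he⟩ := h1
      have : r (b, j) = 0 := by
        simp only [hr]; rw [if_neg]; intro h; exact hb (congrArg Prod.fst h)
      rw [this]
      exact Abel_nontrivial' _ _ (hθn j) e (hpow _ he)
  have hsum := Abel.sum Finset.univ c (fun x => AA (XX (ψ x.1) (θ ^ (x.2 : ℕ)))) r 1
    (fun x _ m => AA_norm_le _ (XX_norm_le _ _ (hθn _)) m) hAbel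
  have hval : ∑ x, c x * r x = 1 := by
    rw [Finset.sum_eq_single (0 : (K → Fin p) × Fin p)]
    · simp only [hr, hc, hψ, if_true, mul_one]
      simp only [Prod.fst_zero, Prod.snd_zero, Pi.zero_apply, Fin.val_zero, zero_mul, pow_zero, one_mul]
      exact Finset.prod_eq_one fun e _ => MulChar.one_apply (hv0 e).isUnit
    · intro b _ hb; simp [hr, hb]
    · simp
  rw [hval] at hsum
  -- the indicator
  have hI : ∀ f : K[X], ∑ x, c x * XX (ψ x.1) (θ ^ (x.2 : ℕ)) f =
      (∏ e, ∑ b : Fin p, (η ^ (b : ℕ)) (v e * f.eval e)) *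
        ∑ j : Fin p, (θ ^ (f.natDegree + (p - 1))) ^ (j : ℕ) := by
    intro f
    rw [Finset.prod_univ_sum, Fintype.piFinset_univ, Finset.sum_mul_sum, ← Finset.univ_product_univ,
      Finset.sum_product]
    refine Finset.sum_congr rfl fun b _ => Finset.sum_congr rfl fun j _ => ?_
    simp only [hc, XX, hψ, map_mul, Finset.prod_mul_distrib]
    rw [← pow_mul, ← pow_mul, mul_comm (f.natDegree + (p - 1)), mul_add, pow_add]
    ring
  have hex : ∃ m, ∃ x ∈ PP K m, ∑ i, c i * XX (ψ i.1) (θ ^ (i.2 : ℕ)) (x.1 ^ x.2) ≠ 0 := by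
    by_contra hcon
    push Not at hcon
    have : (fun m => ∑ i, c i * AA (XX (ψ i.1) (θ ^ (i.2 : ℕ))) m) = fun _ => 0 := by
      funext m
      have : ∑ i, c i * AA (XX (ψ i.1) (θ ^ (i.2 : ℕ))) m =
        (∑ x ∈ PP K m, (x.1.natDegree : ℂ) * ∑ i, c i * XX (ψ i.1) (θ ^ (i.2 : ℕ)) (x.1 ^ x.2)) /
          (Fintype.card K : ℂ) ^ m := by
        simp only [AA, SS, div_eq_mul_inv, Finset.sum_mul, Finset.mul_sum]
        rw [Finset.sum_comm]
        refine Finset.sum_congr rfl fun _ _ => Finset.sum_congr rfl fun _ _ => by ring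
      rw [this, Finset.sum_eq_zero, zero_div]
      intro x hx
      rw [hcon m x hx, mul_zero]
    rw [this] at hsum
    exact one_ne_zero (hsum.unique Abel.zero)
  obtain ⟨m, ⟨P, k⟩, hx, hne⟩ := hex
  obtain ⟨hmon, hirr, hk, hdeg⟩ := mem_PP.1 hx
  simp only at hmon hirr hk hdeg hne
  rw [hI] at hne
  obtain ⟨hne1, hne2⟩ := mul_ne_zero_iff.1 hne
  rw [Finset.prod_ne_zero_iff] at hne1
  have hloc : ∀ e, v e * (P ^ k).eval e ≠ 0 ∧ η (v e * (P ^ k).eval e) = 1 := fun e =>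
    sum_char_ne_zero η hηp _ (hne1 e (Finset.mem_univ e))
  have hθ1 := eq_one_of_geom_ne_zero (by rw [← pow_mul, mul_comm, pow_mul, hθ.pow_eq_one, one_pow]) hne2
  rw [hθ.pow_eq_one_iff_dvd, hmon.natDegree_pow] at hθ1
  have hnd : ¬ p ∣ k * P.natDegree := by
    intro h
    have h2 := (Nat.dvd_add_right h).1 hθ1
    have := Nat.le_of_dvd (by have := hp.one_lt; omega) h2
    have := hp.one_lt; omega
  have hpk : Nat.Coprime k p := by
    rw [Nat.coprime_comm, hp.coprime_iff_not_dvd]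
    exact fun h => hnd (h.mul_right _)
  have hP0 : ∀ e, P.eval e ≠ 0 := by
    intro e he
    apply (hloc e).1
    rw [eval_pow, he, zero_pow hk.ne', mul_zero]
  refine ⟨P, hmon, hirr, fun h => hnd (h.mul_left _), hP0, ?_, ?_⟩
  · intro e he
    have h1 := (hloc e).2
    simp only [hv, if_neg he, one_mul, eval_pow, map_pow] at h1
    have h2 := mulChar_apply_pow η hηp (hP0 e)
    have := orderOf_dvd_of_pow_eq_one h1
    have h3 := Nat.dvd_gcd this (orderOf_dvd_of_pow_eq_one h2)
    rw [hpk] at h3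
    exact orderOf_eq_one_iff.1 (Nat.dvd_one.1 h3)
  · intro h
    have h1 := (hloc 0).2
    simp only [hv, if_true, eval_pow, map_mul, map_pow, h, one_pow, mul_one] at h1
    apply hy0
    have : η ((y0⁻¹ : Kˣ) : K) * η y0 = 1 := by rw [← map_mul]; simp
    rw [h1, one_mul] at this
    exact this

lemma exists_char (p : ℕ) (hp : p.Prime) (h : p ∣ Fintype.card K - 1) :
    ∃ η : MulChar K ℂ, orderOf η = p :=
  MulChar.exists_mulChar_orderOf K h (Complex.isPrimitiveRoot_exp p hp.ne_zero)
end D4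
section C1
open Matrix

lemma eigen_pow {F : Type*} [Field F] (x : SpecialLinearGroup (Fin 2) F) (s : F) (hs : s ≠ 0)
    (h : s + s⁻¹ = (x : Matrix (Fin 2) (Fin 2) F).trace) (n : ℕ) (hn : x ^ n = 1) : s ^ n = 1 := by
  set M : Matrix (Fin 2) (Fin 2) F := (x : Matrix (Fin 2) (Fin 2) F) with hM
  have hdet : M.det = 1 := x.2
  have h0 : (M - s • (1 : Matrix (Fin 2) (Fin 2) F)).det = 0 := by
    rw [Matrix.trace_fin_two] at h
    rw [Matrix.det_fin_two] at hdet ⊢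
    simp
    have : s * s⁻¹ = 1 := mul_inv_cancel₀ hs
    linear_combination hdet + s * h - this
  obtain ⟨v, hv0, hv⟩ := Matrix.exists_mulVec_eq_zero_iff.2 h0
  have hv1 : M *ᵥ v = s • v := by
    rw [Matrix.sub_mulVec, Matrix.smul_mulVec, Matrix.one_mulVec] at hv
    exact sub_eq_zero.1 hv
  have hk : ∀ k : ℕ, (M ^ k) *ᵥ v = s ^ k • v := by
    intro k
    induction k with
    | zero => simp
    | succ k ih => rw [pow_succ, ← Matrix.mulVec_mulVec, hv1, Matrix.mulVec_smul, ih, smul_smul, pow_succ']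
  have h2 := hk n
  have h3 : M ^ n = 1 := by
    have h5 := congrArg (fun z : Matrix.SpecialLinearGroup (Fin 2) F => (z : Matrix (Fin 2) (Fin 2) F)) hn
    simp only [Matrix.SpecialLinearGroup.coe_pow, Matrix.SpecialLinearGroup.coe_one] at h5
    exact h5
  rw [h3, Matrix.one_mulVec] at h2
  obtain ⟨i, hi⟩ := Function.ne_iff.1 hv0
  have h4 := congrFun h2 i
  rw [Pi.smul_apply, smul_eq_mul] at h4
  exact mul_right_cancel₀ hi (by rw [one_mul]; exact h4.symm)

lemma card_SL2 (F : Type*) [Field F] [Fintype F] :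
    Nat.card (SpecialLinearGroup (Fin 2) F) =
      Fintype.card F * (Fintype.card F - 1) * (Fintype.card F + 1) := by
  classical
  set q := Fintype.card F with hq
  have hq1 : 1 < q := Fintype.one_lt_card
  have hsurj : Function.Surjective (GeneralLinearGroup.det : GL (Fin 2) F →* Fˣ) := by
    intro u
    refine ⟨GeneralLinearGroup.mkOfDetNeZero !![(u:F), 0; 0, 1] (by simp), ?_⟩
    ext
    simp [GeneralLinearGroup.mkOfDetNeZero]
  have e : Nat.card (SpecialLinearGroup (Fin 2) F) =
      Nat.card (GeneralLinearGroup.det : GL (Fin 2) F →* Fˣ).ker := by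
    refine Nat.card_congr (Equiv.ofBijective
      (fun x => ⟨(x : GL (Fin 2) F), by rw [MonoidHom.mem_ker]; ext; simp⟩) ⟨?_, ?_⟩)
    · intro x y h
      have := congrArg Subtype.val h
      have := congrArg (fun z : GL (Fin 2) F => (z : Matrix (Fin 2) (Fin 2) F)) this
      exact Subtype.ext this
    · rintro ⟨y, hy⟩
      refine ⟨⟨(y : Matrix (Fin 2) (Fin 2) F), ?_⟩, ?_⟩
      · rw [MonoidHom.mem_ker] at hy
        have := congrArg Units.val hy
        simpa using this
      · ext; rfl
  have h1 := Subgroup.card_mul_index (GeneralLinearGroup.det : GL (Fin 2) F →* Fˣ).ker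
  rw [Subgroup.index_ker, MonoidHom.range_eq_top.2 hsurj, Subgroup.card_top, ← e,
    Matrix.card_GL_field, Fin.prod_univ_two, Nat.card_eq_fintype_card (α := Fˣ), Fintype.card_units, ← hq] at h1
  have h2 : 0 < q - 1 := by omega
  refine Nat.eq_of_mul_eq_mul_right h2 (h1.trans ?_)
  obtain ⟨r, hr⟩ : ∃ r, q = r + 1 := ⟨q - 1, by omega⟩
  rw [hr]
  simp only [Fin.val_zero, Fin.val_one, pow_zero, pow_one, Nat.add_sub_cancel]
  have a1 : (r+1)^2 - 1 = r * (r + 2) := by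
    rw [Nat.sub_eq_iff_eq_add (Nat.one_le_pow _ _ (by omega))]; ring
  have a2 : (r+1)^2 - (r+1) = r * (r + 1) := by
    rw [Nat.sub_eq_iff_eq_add (Nat.le_self_pow (by omega) _)]; ring
  rw [a1, a2]; ring

lemma center_SL2 (F : Type*) [Field F] [CharP F 2] :
    Subgroup.center (SpecialLinearGroup (Fin 2) F) = ⊥ := by
  rw [eq_bot_iff]
  intro x hx
  obtain ⟨r, hr, hx⟩ := Matrix.SpecialLinearGroup.mem_center_iff.1 hx
  rw [Subgroup.mem_bot]
  have h1 : (r - 1) ^ 2 = 0 := by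
    rw [sub_sq]
    rw [Fintype.card_fin] at hr
    rw [hr]
    have : (2:F) = 0 := CharTwo.two_eq_zero
    linear_combination (1 - r) * this
  have h2 : r = 1 := sub_eq_zero.1 (pow_eq_zero_iff two_ne_zero |>.1 h1)
  ext i j
  rw [← hx, h2]; simp

lemma simple_SL2 (F : Type*) [Field F] [CharP F 2] (h : 4 ≤ Nat.card F) :
    IsSimpleGroup (SpecialLinearGroup (Fin 2) F) := by
  have := Matrix.ProjectiveSpecialLinearGroup.rank_two_simple h
  refine MulEquiv.isSimpleGroup (H := ProjectiveSpecialLinearGroup (Fin 2) F) ?_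
  exact ((QuotientGroup.quotientMulEquivOfEq (center_SL2 F)).trans QuotientGroup.quotientBot).symm

end C1
section C2

/-- truncated trace polynomial -/
noncomputable def TT (R : Type*) [CommRing R] (k : ℕ) : R[X] := ∑ j ∈ Finset.range k, X ^ (2 ^ j)

lemma TT_sq {R : Type*} [CommRing R] [CharP R 2] (k : ℕ) (z : R) :
    (∑ j ∈ Finset.range k, z ^ (2 ^ j)) * ((∑ j ∈ Finset.range k, z ^ (2 ^ j)) + 1) = z ^ (2 ^ k) + z := by
  have h2 : (2 : R) = 0 := CharTwo.two_eq_zero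
  induction k with
  | zero => simp; linear_combination -z * h2
  | succ k ih =>
    rw [Finset.sum_range_succ]
    generalize (∑ j ∈ Finset.range k, z ^ (2 ^ j)) = S at ih
    rw [pow_succ 2 k, pow_mul]
    linear_combination ih + (z ^ 2 ^ k + S * z ^ 2 ^ k) * h2

section
variable {K : Type} [Field K] [CharP K 2]

lemma TT_deg (k : ℕ) : (TT K (k+1)).Monic ∧ (TT K (k+1)).natDegree = 2 ^ k := by
  induction k with
  | zero => simp [TT, monic_X]
  | succ k ih =>
    have h1 : TT K (k+1+1) = X ^ (2 ^ (k+1)) + TT K (k+1) := by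
      rw [TT, Finset.sum_range_succ, add_comm, TT]
    have hlt : (TT K (k+1)).degree < (X ^ (2 ^ (k+1)) : K[X]).degree := by
      rw [degree_X_pow, degree_eq_natDegree ih.1.ne_zero, ih.2]
      exact_mod_cast Nat.pow_lt_pow_right (by norm_num) (by omega)
    rw [h1]
    refine ⟨(monic_X_pow _).add_of_left hlt, ?_⟩
    rw [natDegree_add_eq_left_of_degree_lt hlt, natDegree_X_pow]

lemma TT1_deg (k : ℕ) : (TT K (k+1) + 1).Monic ∧ (TT K (k+1) + 1).natDegree = 2 ^ k := by
  obtain ⟨h1, h2⟩ := TT_deg (K := K) k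
  have hlt : (1 : K[X]).degree < (TT K (k+1)).degree := by
    rw [degree_one, degree_eq_natDegree h1.ne_zero, h2]
    exact_mod_cast Nat.pow_pos (n := k) (by norm_num : 0 < 2)
  refine ⟨h1.add_of_left hlt, ?_⟩
  rw [natDegree_add_eq_left_of_degree_lt hlt, h2]

lemma TT_mul [Fintype K] (k : ℕ) (hK : Fintype.card K = 2 ^ k) :
    TT K k * (TT K k + 1) = X ^ (Nat.card K) - X := by
  rw [TT, TT_sq, Nat.card_eq_fintype_card, hK, CharTwo.sub_eq_add]

lemma TT_splits [Fintype K] (k : ℕ) (hK : Fintype.card K = 2 ^ k) :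
    (TT K k).Splits ∧ (TT K k + 1).Splits := by
  have h0 : (X ^ (Nat.card K) - X : K[X]) ≠ 0 :=
    FiniteField.X_pow_card_sub_X_ne_zero K (by rw [Nat.card_eq_fintype_card]; exact Fintype.one_lt_card)
  have h1 := Polynomial.splits_X_pow_nat_card_sub_X (K := K)
  exact ⟨h1.of_dvd h0 ⟨_, (TT_mul k hK).symm⟩, h1.of_dvd h0 ⟨_, ((mul_comm _ _).trans (TT_mul k hK)).symm⟩⟩

lemma TT_eval0 (k : ℕ) : (TT K k).eval 0 = 0 := by
  simp [TT, eval_finsetSum]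

lemma TT_sep (k : ℕ) : (TT K (k+1)).Separable := by
  have : derivative (TT K (k+1)) = 1 := by
    have h2 : (2 : K) = 0 := CharTwo.two_eq_zero
    rw [TT, derivative_sum, Finset.sum_range_succ', Finset.sum_eq_zero]
    · simp
    · intro j _
      rw [derivative_X_pow, pow_succ]
      push_cast
      simp [h2]
  rw [Polynomial.Separable, this]
  exact isCoprime_one_right

lemma norm_linear (f : K[X]) (hf : f.Monic) [Fact (Irreducible f)] (c : K) :
    Algebra.norm K (algebraMap K (AdjoinRoot f) c - AdjoinRoot.root f) = f.eval c := by
  set b := AdjoinRoot.powerBasis hf.ne_zero with hb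
  have h1 := charpoly_leftMulMatrix b
  rw [hb, AdjoinRoot.minpoly_powerBasis_gen_of_monic hf, ← hb] at h1
  rw [Algebra.norm_eq_matrix_det b.basis]
  conv_rhs => rw [← h1]
  rw [Matrix.eval_charpoly, map_sub, AlgHom.commutes]
  rfl

lemma norm_linear2 (f : K[X]) (hf : f.Monic) [Fact (Irreducible f)] (t e : K) (ht : t ≠ 0) :
    Algebra.norm K (AdjoinRoot.root f * algebraMap K (AdjoinRoot f) t - algebraMap K (AdjoinRoot f) e) =
      t ^ f.natDegree * f.eval (e / t) := by
  have : CharP (AdjoinRoot f) 2 := charP_of_injective_algebraMap (algebraMap K _).injective 2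
  have h1 : AdjoinRoot.root f * algebraMap K (AdjoinRoot f) t - algebraMap K (AdjoinRoot f) e =
      algebraMap K (AdjoinRoot f) t * (algebraMap K (AdjoinRoot f) (e / t) - AdjoinRoot.root f) := by
    rw [mul_sub, ← map_mul, mul_div_cancel₀ _ ht, CharTwo.sub_eq_add, CharTwo.sub_eq_add]
    ring
  rw [h1, map_mul, norm_linear f hf, Algebra.norm_algebraMap_of_basis (AdjoinRoot.powerBasis hf.ne_zero).basis]
  simp

lemma norm_split (f : K[X]) (hf : f.Monic) [Fact (Irreducible f)] (t : K) (ht : t ≠ 0) (A : K[X]) (hA : A.Monic) (hs : A.Splits) :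
    Algebra.norm K (aeval (AdjoinRoot.root f * algebraMap K (AdjoinRoot f) t) A) =
      (A.roots.map (fun e => t ^ f.natDegree * f.eval (e / t))).prod := by
  conv_lhs => rw [hs.eq_prod_roots_of_monic hA]
  rw [map_multiset_prod, map_multiset_prod, Multiset.map_map, Multiset.map_map]
  congr 1
  refine Multiset.map_congr rfl fun e _ => ?_
  simp only [Function.comp, map_sub, aeval_X, aeval_C]
  exact norm_linear2 f hf t e ht

lemma char_norm (f : K[X]) (hf : f.Monic) [Fact (Irreducible f)] (η : MulChar K ℂ) (t : K) (ht : t ≠ 0) (A : K[X])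
    (hA : A.Monic) (hs : A.Splits) (hη : ∀ e, e ≠ 0 → η (f.eval e) = 1) (h0 : A.eval 0 ≠ 0) :
    η (Algebra.norm K (aeval (AdjoinRoot.root f * algebraMap K (AdjoinRoot f) t) A)) =
      (η t ^ f.natDegree) ^ A.natDegree := by
  rw [norm_split f hf t ht A hA hs, map_multiset_prod, Multiset.map_map, hs.natDegree_eq_card_roots,
    ← Multiset.prod_replicate (Multiset.card A.roots), ← Multiset.map_const']
  congr 1
  refine Multiset.map_congr rfl fun e he => ?_
  have : e ≠ 0 := by
    rintro rfl
    exact h0 (isRoot_of_mem_roots he)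
  simp only [Function.comp, map_mul, map_pow, hη _ (div_ne_zero this ht), mul_one]

lemma char_norm0 (f : K[X]) (hf : f.Monic) [Fact (Irreducible f)] (η : MulChar K ℂ) (t : K) (ht : t ≠ 0) (A : K[X])
    (hA : A.Monic) (hs : A.Splits) (hη : ∀ e, e ≠ 0 → η (f.eval e) = 1) (h0 : A.eval 0 = 0)
    (hsep : A.Separable) :
    η (Algebra.norm K (aeval (AdjoinRoot.root f * algebraMap K (AdjoinRoot f) t) A)) =
      (η t ^ f.natDegree) ^ A.natDegree * η (f.eval 0) := by
  obtain ⟨B, hB⟩ : X ∣ A := by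
    have := dvd_iff_isRoot.2 (show A.IsRoot 0 from h0)
    simpa using this
  have hBm : B.Monic := by
    rw [hB] at hA; exact monic_X.of_mul_monic_left hA
  have hBs : B.Splits := hs.of_dvd hA.ne_zero ⟨X, by rw [hB, mul_comm]⟩
  have hB0 : B.eval 0 ≠ 0 := by
    intro h
    obtain ⟨D, hD⟩ : X ∣ B := by
      have := dvd_iff_isRoot.2 (show B.IsRoot 0 from h)
      simpa using this
    have : IsUnit (X : K[X]) := hsep.squarefree X ⟨D, by rw [hB, hD, mul_assoc]⟩
    exact not_isUnit_X this
  have h1 := char_norm f hf η t ht B hBm hBs hη hB0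
  rw [hB, map_mul, map_mul, map_mul, h1, monic_X.natDegree_mul hBm, natDegree_X, aeval_X]
  have h2 := norm_linear2 f hf t 0 ht
  rw [map_zero, sub_zero, zero_div] at h2
  rw [h2, map_mul, map_pow, pow_add, pow_one]
  ring

end
end C2
section C3
open Matrix

lemma factorization_aux (p : ℕ) (hp : p.Prime) (hp2 : p ≠ 2) (Q m : ℕ) (hQ : 1 < Q) (h : p ∣ Q - 1)
    (hm : ¬ p ∣ m) : (Q ^ m * (Q ^ m - 1) * (Q ^ m + 1)).factorization p = (Q - 1).factorization p := by
  have : Fact p.Prime := ⟨hp⟩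
  have hm0 : m ≠ 0 := by rintro rfl; exact hm (dvd_zero _)
  have hpQ : ¬ p ∣ Q := by
    intro h'
    have := (Nat.dvd_sub_iff_right hQ.le h').1 h
    exact hp.one_lt.ne' (Nat.dvd_one.1 this)
  have hq1 : 1 < Q ^ m := Nat.one_lt_pow hm0 hQ
  have hdvd : p ∣ Q ^ m - 1 := by
    have := Nat.sub_dvd_pow_sub_pow Q 1 m
    rw [one_pow] at this
    exact h.trans this
  have hpq : ¬ p ∣ Q ^ m := fun h' => hpQ (hp.dvd_of_dvd_pow h')
  have hpq1 : ¬ p ∣ Q ^ m + 1 := by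
    intro h'
    have h3 := Nat.dvd_sub h' hdvd
    have : Q ^ m + 1 - (Q ^ m - 1) = 2 := by omega
    rw [this] at h3
    exact hp2 ((Nat.prime_dvd_prime_iff_eq hp Nat.prime_two).1 h3)
  rw [Nat.factorization_mul (mul_ne_zero (by omega) (by omega)) (by omega), Nat.factorization_mul (by omega) (by omega)]
  simp only [Finsupp.add_apply, Nat.factorization_eq_zero_of_not_dvd hpq,
    Nat.factorization_eq_zero_of_not_dvd hpq1]
  rw [Nat.factorization_def _ hp, Nat.factorization_def _ hp]
  have := padicValNat.pow_sub_pow (p := p) (x := Q) (y := 1) (hp.odd_of_ne_two hp2) hQ h hpQ hm0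
  rw [one_pow, padicValNat.eq_zero_of_not_dvd hm] at this
  omega

/-- the diagonal torus -/
def diagHom (K F : Type*) [Field K] [Field F] [Algebra K F] :
    Kˣ →* Matrix.SpecialLinearGroup (Fin 2) F where
  toFun t := ⟨!![algebraMap K F t, 0; 0, algebraMap K F (t⁻¹ : Kˣ)], by
    rw [Matrix.det_fin_two_of, ← map_mul]; simp⟩
  map_one' := Subtype.ext (by
    change !![algebraMap K F (1 : Kˣ), 0; 0, algebraMap K F ((1 : Kˣ)⁻¹ : Kˣ)] = (1 : Matrix (Fin 2) (Fin 2) F)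
    ext i j; fin_cases i <;> fin_cases j <;> simp)
  map_mul' a b := Subtype.ext (by
    change !![algebraMap K F (a * b : Kˣ), 0; 0, algebraMap K F ((a * b)⁻¹ : Kˣ)] =
      !![algebraMap K F a, 0; 0, algebraMap K F (a⁻¹ : Kˣ)] *
        !![algebraMap K F b, 0; 0, algebraMap K F (b⁻¹ : Kˣ)]
    rw [Matrix.mul_fin_two]
    ext i j; fin_cases i <;> fin_cases j <;> simp [mul_comm])

lemma diagHom_coe (K F : Type*) [Field K] [Field F] [Algebra K F] (t : Kˣ) :
    ((diagHom K F t : Matrix.SpecialLinearGroup (Fin 2) F) : Matrix (Fin 2) (Fin 2) F) =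
      !![algebraMap K F t, 0; 0, algebraMap K F (t⁻¹ : Kˣ)] := rfl

lemma diagHom_inj (K F : Type*) [Field K] [Field F] [Algebra K F] :
    Function.Injective (diagHom K F) := by
  intro a b h
  have h1 := congrArg (fun z : Matrix.SpecialLinearGroup (Fin 2) F => (z : Matrix (Fin 2) (Fin 2) F) 0 0) h
  simp only [diagHom_coe] at h1
  simp at h1
  exact Units.ext h1

/-- the coset representative -/
def gElt (F : Type*) [Field F] [CharP F 2] (d : F) : Matrix.SpecialLinearGroup (Fin 2) F :=
  ⟨!![0, 1; 1, d], by rw [Matrix.det_fin_two_of, CharTwo.sub_eq_add]; simp⟩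

lemma gElt_coe (F : Type*) [Field F] [CharP F 2] (d : F) :
    ((gElt F d : Matrix.SpecialLinearGroup (Fin 2) F) : Matrix (Fin 2) (Fin 2) F) = !![0, 1; 1, d] := rfl

lemma ratio_add_inv {F : Type*} [Field F] [CharP F 2] (W : F) (h1 : W ≠ 0) (h2 : W + 1 ≠ 0) :
    W / (W + 1) + (W / (W + 1))⁻¹ = (W * (W + 1))⁻¹ := by
  have h2 : (2 : F) = 0 := CharTwo.two_eq_zero
  field_simp
  linear_combination (W + W ^ 2) * h2

lemma key_odd {K : Type} [Field K] [Fintype K] [CharP K 2] (k : ℕ) (hK : Fintype.card K = 2 ^ (k+1))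
    (p : ℕ) (η : MulChar K ℂ) (hη : η ^ p = 1) (f : K[X]) (hf : f.Monic) [Fact (Irreducible f)]
    [CharP (AdjoinRoot f) 2] (h0 : ∀ e, f.eval e ≠ 0)
    (h1 : ∀ e, e ≠ 0 → η (f.eval e) = 1) (h2 : η (f.eval 0) ≠ 1) (t : Kˣ) (n : ℕ)
    (hn : Nat.Coprime n p) (hx : (gElt (AdjoinRoot f)
      (AdjoinRoot.root f ^ (2 ^ (k+1)) + AdjoinRoot.root f)⁻¹ * diagHom K (AdjoinRoot f) t) ^ n = 1) :
    False := by
  let F := AdjoinRoot f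
  have hfm : Module.Finite K F := (AdjoinRoot.powerBasis hf.ne_zero).finite
  set w : F := AdjoinRoot.root f with hw
  have ht : (t : K) ≠ 0 := t.ne_zero
  set τ : F := algebraMap K F t with hτ
  have hτ0 : τ ≠ 0 := by rw [hτ]; simp
  obtain ⟨m1, d1⟩ := TT_deg (K := K) k
  obtain ⟨m2, d2⟩ := TT1_deg (K := K) k
  obtain ⟨s1, s2⟩ := TT_splits (K := K) (k+1) hK
  set W : F := aeval (w * τ) (TT K (k+1)) with hW
  have hW1 : W + 1 = aeval (w * τ) (TT K (k+1) + 1) := by rw [map_add, map_one]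
  have n1 := char_norm0 f hf η t ht _ m1 s1 h1 (TT_eval0 _) (TT_sep k)
  have n2 := char_norm f hf η t ht _ m2 s2 h1 (by rw [eval_add, TT_eval0]; simp)
  rw [← hw, ← hτ, ← hW, d1] at n1
  rw [← hw, ← hτ, ← hW1, d2] at n2
  have ηne : ∀ x : K, x ≠ 0 → η x ≠ 0 := by
    intro x hx h
    have := mulChar_norm η hx
    rw [h] at this; simp at this
  have hA : (η t ^ f.natDegree) ^ 2 ^ k ≠ 0 := pow_ne_zero _ (pow_ne_zero _ (ηne _ ht))
  have hW0 : W ≠ 0 := by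
    intro h
    rw [h, Algebra.norm_zero, MulChar.map_zero] at n1
    exact mul_ne_zero hA (ηne _ (h0 0)) n1.symm
  have hW10 : W + 1 ≠ 0 := by
    intro h
    rw [h, Algebra.norm_zero, MulChar.map_zero] at n2
    exact hA n2.symm
  have hWW : W * (W + 1) = τ * (w ^ (2 ^ (k+1)) + w) := by
    have h3 : W = ∑ j ∈ Finset.range (k+1), (w * τ) ^ (2 ^ j) := by
      rw [hW, TT, map_sum]; simp
    rw [h3, TT_sq, mul_pow]
    have : τ ^ (2 ^ (k+1)) = τ := by
      rw [hτ, ← map_pow, ← hK, FiniteField.pow_card]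
    rw [this]; ring
  set u := w ^ (2 ^ (k+1)) + w with hu
  have hu0 : u ≠ 0 := by
    intro h
    rw [h, mul_zero] at hWW
    exact mul_ne_zero hW0 hW10 hWW
  set s := W / (W + 1) with hs
  have hs0 : s ≠ 0 := div_ne_zero hW0 hW10
  have htr : s + s⁻¹ = ((gElt F u⁻¹ * diagHom K F t : Matrix.SpecialLinearGroup (Fin 2) F) :
      Matrix (Fin 2) (Fin 2) F).trace := by
    rw [Matrix.SpecialLinearGroup.coe_mul, gElt_coe, diagHom_coe, Matrix.mul_fin_two,
      Matrix.trace_fin_two_of]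
    simp
    rw [← hτ, ← mul_inv, mul_comm u, ← hWW]
    exact ratio_add_inv W hW0 hW10
  have hsn := eigen_pow _ s hs0 htr n hx
  have hN : (η (Algebra.norm K s)) ^ n = 1 := by
    rw [← map_pow, ← map_pow, hsn, map_one, map_one]
  have hmul : η (Algebra.norm K s) * η (Algebra.norm K (W + 1)) = η (Algebra.norm K W) := by
    rw [← map_mul, ← map_mul, hs, div_mul_cancel₀ _ hW10]
  rw [n1, n2, mul_comm] at hmul
  rw [mul_left_cancel₀ hA hmul] at hN
  have h3 := mulChar_apply_pow η hη (h0 0)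
  have h4 := Nat.dvd_gcd (orderOf_dvd_of_pow_eq_one hN) (orderOf_dvd_of_pow_eq_one h3)
  rw [hn] at h4
  exact h2 (orderOf_eq_one_iff.1 (Nat.dvd_one.1 h4))

open scoped Pointwise in
theorem odd_case (p : ℕ) (hp : p.Prime) (hp2 : p ≠ 2) :
    ∃ (G : Type) (_ : Group G) (_ : Finite G), IsSimpleGroup G ∧
      ∃ P : Sylow p G, (P : Subgroup G) ≠ ⊥ ∧
        ∃ g : G, ∀ x ∈ g • ((P : Subgroup G) : Set G), ¬ Nat.Coprime (orderOf x) p := by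
  have hpf : Fact p.Prime := ⟨hp⟩
  have hp3 : 3 ≤ p := by have := hp.two_le; omega
  obtain ⟨k, hk⟩ : ∃ k, p - 1 = k + 1 := ⟨p - 2, by omega⟩
  let K := GaloisField 2 (k+1)
  let _ : Fintype K := Fintype.ofFinite K
  have hK : Fintype.card K = 2 ^ (k+1) := by
    rw [← Nat.card_eq_fintype_card]; exact GaloisField.card 2 (k+1) (by omega)
  have hdvd : p ∣ Fintype.card K - 1 := by
    rw [hK, ← hk]
    have h1 : 2 ^ (p - 1) ≡ 1 [MOD p] := by
      rw [← Nat.totient_prime hp]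
      exact Nat.ModEq.pow_totient ((Nat.coprime_primes Nat.prime_two hp).2 (Ne.symm hp2))
    exact (Nat.modEq_iff_dvd' Nat.one_le_two_pow).1 h1.symm
  obtain ⟨η, hη⟩ := exists_char (K := K) p hp hdvd
  obtain ⟨f, hf, hirr, hdeg, h0, h1, h2⟩ := exists_irreducible p hp hp2 η hη
  have hfact : Fact (Irreducible f) := ⟨hirr⟩
  let F := AdjoinRoot f
  have hchar : CharP F 2 := charP_of_injective_algebraMap (algebraMap K F).injective 2
  let pb := AdjoinRoot.powerBasis hf.ne_zero
  have hfinmod : Module.Finite K F := pb.finite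
  have hfin : Finite F := Module.finite_of_finite K
  let _ : Fintype F := Fintype.ofFinite F
  have hF : Fintype.card F = (Fintype.card K) ^ f.natDegree := by
    rw [Module.card_eq_pow_finrank (K := K) (V := F), pb.finrank]; rfl
  have hcard := card_SL2 F
  have hQ1 : 1 < Fintype.card K := Fintype.one_lt_card
  have hQ4 : 4 ≤ Fintype.card K := by
    rw [hK]
    calc 4 = 2 ^ 2 := by norm_num
      _ ≤ 2 ^ (k+1) := Nat.pow_le_pow_right (by norm_num) (by omega)
  have hm0 : f.natDegree ≠ 0 := hirr.natDegree_pos.ne'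
  have hF4 : 4 ≤ Nat.card F := by
    rw [Nat.card_eq_fintype_card, hF]
    exact hQ4.trans (Nat.le_self_pow hm0 _)
  let S0 : Sylow p Kˣ := default
  have hS0 : Nat.card S0 = p ^ (Nat.card Kˣ).factorization p := S0.card_eq_multiplicity
  have hKu : Nat.card Kˣ = Fintype.card K - 1 := by
    rw [Nat.card_units, Nat.card_eq_fintype_card]
  let P : Subgroup (Matrix.SpecialLinearGroup (Fin 2) F) := (S0 : Subgroup Kˣ).map (diagHom K F)
  have hP : Nat.card P = Nat.card S0 :=
    (Nat.card_congr ((S0 : Subgroup Kˣ).equivMapOfInjective _ (diagHom_inj K F)).toEquiv).symm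
  have hfac : (Nat.card Kˣ).factorization p ≠ 0 := by
    rw [hKu]
    exact (hp.factorization_pos_of_dvd (by omega) hdvd).ne'
  refine ⟨Matrix.SpecialLinearGroup (Fin 2) F, inferInstance, inferInstance, simple_SL2 F hF4,
    Sylow.ofCard P ?_, ?_, gElt F (AdjoinRoot.root f ^ (2 ^ (k+1)) + AdjoinRoot.root f)⁻¹, ?_⟩
  · rw [hP, hS0, hcard, hF, factorization_aux p hp hp2 _ _ hQ1 hdvd hdeg, hKu]
  · rw [Sylow.coe_ofCard]
    intro h
    have h3 : Nat.card P = 1 := by rw [h]; simp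
    rw [hP, hS0] at h3
    exact (Nat.one_lt_pow hfac hp.one_lt).ne' h3
  · rw [Sylow.coe_ofCard]
    rintro x ⟨y, ⟨t, -, rfl⟩, rfl⟩ hco
    exact key_odd k hK p η (by rw [← hη]; exact pow_orderOf_eq_one η) f hf h0 h1 h2 t _ hco
      (pow_orderOf_eq_one _)
end C3
section B
open Matrix

/-- Klein four-group generated by two commuting involutions -/
def klein {G : Type*} [Group G] (a b : G) (ha : a * a = 1) (hb : b * b = 1) (hab : a * b = b * a) :
    Subgroup G where
  carrier := {1, a, b, a * b}
  one_mem' := by simp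
  mul_mem' := by
    have h1 : ∀ z, a * (a * z) = z := fun z => by rw [← mul_assoc, ha, one_mul]
    have h2 : ∀ z, b * (b * z) = z := fun z => by rw [← mul_assoc, hb, one_mul]
    have h3 : ∀ z, b * (a * z) = a * (b * z) := fun z => by rw [← mul_assoc, ← hab, mul_assoc]
    rintro x y (rfl | rfl | rfl | rfl) (rfl | rfl | rfl | rfl) <;>
      simp [mul_assoc, ha, hb, h1, h2, h3, ← hab]
  inv_mem' := by
    have ha' : a⁻¹ = a := inv_eq_of_mul_eq_one_left ha
    have hb' : b⁻¹ = b := inv_eq_of_mul_eq_one_left hb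
    rintro x (rfl | rfl | rfl | rfl) <;> simp [ha', hb', ← hab]

lemma card_klein {G : Type*} [Group G] (a b : G) (ha : a * a = 1) (hb : b * b = 1)
    (hab : a * b = b * a) (h1 : a ≠ 1) (h2 : b ≠ 1) (h3 : a ≠ b) :
    Nat.card (klein a b ha hb hab) = 4 := by
  classical
  have : ((klein a b ha hb hab : Subgroup G) : Set G) = (({1, a, b, a * b} : Finset G) : Set G) := by
    simp [klein]
  have e : Nat.card (klein a b ha hb hab) = Nat.card ((klein a b ha hb hab : Subgroup G) : Set G) := rfl
  rw [e, this, Nat.card_coe_set_eq, Set.ncard_coe_finset]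
  have h4 : a * b ≠ 1 := by
    intro h
    have : b = a := by
      calc b = a * a * b := by rw [ha, one_mul]
        _ = a := by rw [mul_assoc, h, mul_one]
    exact h3 this.symm
  rw [Finset.card_insert_of_notMem, Finset.card_insert_of_notMem, Finset.card_insert_of_notMem,
    Finset.card_singleton]
  · simp; exact h1
  · simp; exact ⟨h3, h2⟩
  · simp; exact ⟨Ne.symm h1, Ne.symm h2, Ne.symm h4⟩

instance fact53 : Fact (Nat.Prime 53) := ⟨by norm_num⟩

abbrev SL53 := Matrix.SpecialLinearGroup (Fin 2) (ZMod 53)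
abbrev PSL53 := Matrix.ProjectiveSpecialLinearGroup (Fin 2) (ZMod 53)

def aElt : SL53 := ⟨!![30, 0; 0, 23], by rw [Matrix.det_fin_two_of]; decide⟩
def bElt : SL53 := ⟨!![0, 1; 52, 0], by rw [Matrix.det_fin_two_of]; decide⟩
def cElt : SL53 := ⟨!![1, 3; 28, 32], by rw [Matrix.det_fin_two_of]; decide⟩

lemma mem_center_of_scalar (x : SL53) (r : ZMod 53) (hr : r ^ 2 = 1)
    (h : (x : Matrix (Fin 2) (Fin 2) (ZMod 53)) = !![r, 0; 0, r]) : x ∈ Subgroup.center SL53 := by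
  rw [Matrix.SpecialLinearGroup.mem_center_iff]
  refine ⟨r, by rw [Fintype.card_fin]; exact hr, ?_⟩
  rw [h]
  ext i j; fin_cases i <;> fin_cases j <;> simp

lemma sq_center (x : SL53) (h : x ∈ Subgroup.center SL53) : x ^ 2 = 1 := by
  obtain ⟨r, hr, hx⟩ := Matrix.SpecialLinearGroup.mem_center_iff.1 h
  rw [Fintype.card_fin] at hr
  ext i j
  rw [Matrix.SpecialLinearGroup.coe_pow, ← hx, ← map_pow, hr, map_one, Matrix.SpecialLinearGroup.coe_one]

lemma not_center (x : SL53) (h : (x : Matrix (Fin 2) (Fin 2) (ZMod 53)) 0 0 ≠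
    (x : Matrix (Fin 2) (Fin 2) (ZMod 53)) 1 1 ∨ (x : Matrix (Fin 2) (Fin 2) (ZMod 53)) 0 1 ≠ 0) :
    x ∉ Subgroup.center SL53 := by
  intro hc
  obtain ⟨r, hr, hx⟩ := Matrix.SpecialLinearGroup.mem_center_iff.1 hc
  rw [← hx] at h
  simp at h

lemma key_two (x : SL53) (s r : ZMod 53) (hs : s ^ 26 = -1) (hsr : s * r = 1)
    (htr : s + r = (x : Matrix (Fin 2) (Fin 2) (ZMod 53)).trace) :
    ¬ Nat.Coprime (orderOf (QuotientGroup.mk x : PSL53)) 2 := by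
  intro hco
  set n := orderOf (QuotientGroup.mk x : PSL53) with hn
  have h1 : (QuotientGroup.mk x : PSL53) ^ n = 1 := pow_orderOf_eq_one _
  have h2 : x ^ n ∈ Subgroup.center SL53 := by
    rw [← QuotientGroup.eq_one_iff, QuotientGroup.mk_pow]; exact h1
  have h3 : x ^ (n * 2) = 1 := by rw [pow_mul]; exact sq_center _ h2
  have hs0 : s ≠ 0 := by
    rintro rfl
    exact absurd hs (by decide)
  have h4 := eigen_pow x s hs0 (by rw [← eq_inv_of_mul_eq_one_right hsr]; exact htr) _ h3
  have h5 : (s ^ 26) ^ n = 1 := by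
    rw [← pow_mul, show 26 * n = (n * 2) * 13 by ring, pow_mul, h4, one_pow]
  rw [hs, Odd.neg_one_pow (Nat.coprime_two_right.1 hco)] at h5
  exact absurd h5 (by decide)

lemma card_PSL53 : Nat.card PSL53 = 74412 := by
  have h1 := card_SL2 (ZMod 53)
  rw [ZMod.card] at h1
  have h2 := Subgroup.card_eq_card_quotient_mul_card_subgroup (Subgroup.center SL53)
  have h3 : Nat.card (Subgroup.center SL53) = 2 := by
    rw [Nat.card_congr (Matrix.SpecialLinearGroup.center_equiv_rootsOfUnity' (0 : Fin 2)).toEquiv]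
    rw [Fintype.card_fin]
    exact (IsPrimitiveRoot.neg_one 53 (by norm_num)).card_rootsOfUnity
  rw [h1, h3] at h2
  have : Nat.card PSL53 * 2 = 148824 := h2.symm
  omega

open scoped Pointwise in
theorem two_case :
    ∃ (G : Type) (_ : Group G) (_ : Finite G), IsSimpleGroup G ∧
      ∃ P : Sylow 2 G, (P : Subgroup G) ≠ ⊥ ∧
        ∃ g : G, ∀ x ∈ g • ((P : Subgroup G) : Set G), ¬ Nat.Coprime (orderOf x) 2 := by
  have hfin : Finite PSL53 := Quotient.finite _
  let A : PSL53 := QuotientGroup.mk aElt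
  let B : PSL53 := QuotientGroup.mk bElt
  have hA : A * A = 1 := (QuotientGroup.eq_one_iff (aElt * aElt)).2
    (mem_center_of_scalar _ (-1) (by decide) (by decide))
  have hB : B * B = 1 := (QuotientGroup.eq_one_iff (bElt * bElt)).2
    (mem_center_of_scalar _ (-1) (by decide) (by decide))
  have hAB : A * B = B * A := QuotientGroup.eq.2
    (mem_center_of_scalar ((aElt * bElt)⁻¹ * (bElt * aElt)) (-1) (by decide) (by decide))
  have hA1 : A ≠ 1 := fun h => not_center aElt (by decide) ((QuotientGroup.eq_one_iff aElt).1 h)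
  have hB1 : B ≠ 1 := fun h => not_center bElt (by decide) ((QuotientGroup.eq_one_iff bElt).1 h)
  have hAB1 : A ≠ B := fun h => not_center (aElt⁻¹ * bElt) (by decide) (QuotientGroup.eq.1 h)
  have hcard := card_klein A B hA hB hAB hA1 hB1 hAB1
  have hfac : (74412 : ℕ).factorization 2 = 2 := by
    rw [show 74412 = 2 ^ 2 * 18603 by norm_num, Nat.factorization_mul (by norm_num) (by norm_num),
      Nat.Prime.factorization_pow Nat.prime_two]
    simp [Nat.factorization_eq_zero_of_not_dvd (show ¬ 2 ∣ 18603 by norm_num)]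
  refine ⟨PSL53, inferInstance, hfin, Matrix.ProjectiveSpecialLinearGroup.rank_two_simple (by simp),
    Sylow.ofCard (klein A B hA hB hAB) ?_, ?_, QuotientGroup.mk cElt, ?_⟩
  · rw [hcard, card_PSL53, hfac]; norm_num
  · rw [Sylow.coe_ofCard]
    intro h
    rw [h] at hcard
    simp at hcard
  · rw [Sylow.coe_ofCard]
    rintro x ⟨y, (rfl | rfl | rfl | rfl), rfl⟩
    · simp only [smul_eq_mul, mul_one]
      exact key_two cElt 14 19 (by decide) (by decide) (by decide)
    · exact key_two (cElt * aElt) 26 51 (by decide) (by decide) (by decide)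
    · exact key_two (cElt * bElt) 33 45 (by decide) (by decide) (by decide)
    · exact key_two (cElt * (aElt * bElt)) 2 27 (by decide) (by decide) (by decide)
end B
end CosetAux

open scoped TensorProduct Pointwise

/-- **Theorem.** For every prime `p` there is a finite simple group `G` with a nontrivial
Sylow `p`-subgroup `P` such that some left coset of `P` in `G` contains no `p'`-elements
(elements of order prime to `p`). -/
theorem exists_simple_group_coset_without_p'_elements (p : ℕ) (hp : p.Prime) :
    ∃ (G : Type) (_ : Group G) (_ : Finite G), IsSimpleGroup G ∧
      ∃ P : Sylow p G, (P : Subgroup G) ≠ ⊥ ∧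
        ∃ g : G, ∀ x ∈ g • ((P : Subgroup G) : Set G), ¬ Nat.Coprime (orderOf x) p := by
  by_cases h : p = 2
  · subst h
    exact CosetAux.two_case
  · exact CosetAux.odd_case p hp h
end

section
/- Let k be an algebraically closed field, let G be a group with a normal subgroup N, and let U and W be finite-dimensional irreducible kG-modules such that N acts irreducibly on U and trivially on W. Then the tensor product V = U ⊗_k W, with the diagonal G-action, is an irreducible kG-module. -/
open scoped TensorProduct

/-- A submodule is `ρ`-invariant if it is stable under every `ρ g`. -/
def IsInvariantSubmodule {k G V : Type*} [CommSemiring k] [Monoid G] [AddCommMonoid V]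
    [Module k V] (ρ : Representation k G V) (U : Submodule k V) : Prop :=
  ∀ g : G, ∀ v ∈ U, ρ g v ∈ U

/-- A representation is irreducible if `V ≠ 0` and the only invariant submodules are `⊥`
and `⊤`. -/
def IsIrreducibleRep {k G V : Type*} [CommSemiring k] [Monoid G] [AddCommMonoid V]
    [Module k V] (ρ : Representation k G V) : Prop :=
  Nontrivial V ∧ ∀ U : Submodule k V, IsInvariantSubmodule ρ U → U = ⊥ ∨ U = ⊤

/-- Burnside's theorem for group representations. -/
theorem adjoin_range_eq_top_aux {k : Type*} [Field k] [IsAlgClosed k] {H : Type*} [Monoid H]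
    {U : Type*} [AddCommGroup U] [Module k U] [FiniteDimensional k U]
    (ρ : Representation k H U) (h : IsIrreducibleRep ρ) :
    Algebra.adjoin k (Set.range ρ) = (⊤ : Subalgebra k (Module.End k U)) := by
  obtain ⟨hnt, hs⟩ := h
  set A := Algebra.adjoin k (Set.range ρ) with hA
  have hsimple : IsSimpleModule A U := by
    rw [isSimpleModule_iff]
    refine { exists_pair_ne := ⟨⊥, ⊤, bot_ne_top⟩, eq_bot_or_eq_top := fun X => ?_ }
    rcases hs (X.restrictScalars k) (fun g v hv =>
      X.smul_mem (⟨ρ g, Algebra.subset_adjoin ⟨g, rfl⟩⟩ : A) hv) with h | h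
    · left; simpa using h
    · right; simpa using h
  rw [eq_top_iff]
  rintro f -
  have hb : Function.Bijective (algebraMap k (Module.End A U)) :=
    IsSimpleModule.algebraMap_end_bijective_of_isAlgClosed k
  let F : Module.End (Module.End A U) U :=
    { toFun := f
      map_add' := f.map_add
      map_smul' := fun c u => by
        obtain ⟨c, rfl⟩ := hb.2 c
        simp }
  obtain ⟨s, hs'⟩ := Module.Finite.fg_top (R := k) (M := U)
  obtain ⟨r, hr⟩ := jacobson_density F s
  have : f = r.1 := LinearMap.ext_on hs' fun m hm => hr m hm
  rw [this]
  exact r.2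

/-- **Lemma.** Let `k` be algebraically closed, `G` a group with a normal subgroup `N`, and
`U`, `W` finite-dimensional irreducible `kG`-modules with `N` irreducible on `U` and trivial
on `W`.  Then `V = U ⊗ W` with the diagonal `G`-action is an irreducible `kG`-module. -/
theorem tprod_irreducible
    (k : Type*) [Field k] [IsAlgClosed k]
    (G : Type*) [Group G] (N : Subgroup G) (hN : N.Normal)
    (U W : Type*) [AddCommGroup U] [Module k U] [FiniteDimensional k U]
    [AddCommGroup W] [Module k W] [FiniteDimensional k W]
    (ρU : Representation k G U) (ρW : Representation k G W)
    (hU : IsIrreducibleRep ρU) (hW : IsIrreducibleRep ρW)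
    (hNU : IsIrreducibleRep (ρU.comp N.subtype))
    (hNW : ∀ x : N, ρW (x : G) = 1) :
    IsIrreducibleRep (ρU.tprod ρW) := by
  obtain ⟨hntU, -⟩ := hU
  obtain ⟨hntW, hsW⟩ := hW
  refine ⟨inferInstance, fun X hX => ?_⟩
  let S : Subalgebra k (Module.End k U) :=
    { carrier := {T | ∀ x ∈ X, T.rTensor W x ∈ X}
      mul_mem' := fun {a b} ha hb x hx => by
        rw [LinearMap.rTensor_mul]
        exact ha _ (hb x hx)
      add_mem' := fun {a b} ha hb x hx => by
        rw [LinearMap.rTensor_add]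
        exact X.add_mem (ha x hx) (hb x hx)
      algebraMap_mem' := fun c x hx => by
        rw [Algebra.algebraMap_eq_smul_one, LinearMap.rTensor_smul, Module.End.one_eq_id,
          LinearMap.rTensor_id]
        exact X.smul_mem c hx }
  have hS : ∀ T : Module.End k U, ∀ x ∈ X, T.rTensor W x ∈ X := by
    intro T
    have h1 : Algebra.adjoin k (Set.range (ρU.comp N.subtype)) ≤ S := by
      apply Algebra.adjoin_le
      rintro _ ⟨n, rfl⟩ x hx
      have h2 := hX n x hx
      rw [Representation.tprod_apply, hNW n] at h2
      exact h2
    rw [adjoin_range_eq_top_aux _ hNU] at h1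
    exact h1 (Algebra.mem_top : T ∈ ⊤)
  let Y : Submodule k W :=
    { carrier := {w | ∀ u : U, u ⊗ₜ[k] w ∈ X}
      add_mem' := fun {a b} ha hb u => by
        rw [TensorProduct.tmul_add]
        exact X.add_mem (ha u) (hb u)
      zero_mem' := fun u => by simp
      smul_mem' := fun c w hw u => by
        rw [TensorProduct.tmul_smul]
        exact X.smul_mem c (hw u) }
  have hY : IsInvariantSubmodule ρW Y := by
    intro g w hw u
    have h1 := hX g _ (hw (ρU g⁻¹ u))
    simpa [Representation.tprod_apply] using h1
  rcases hsW Y hY with h | h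
  · left
    rw [eq_bot_iff]
    intro x hx
    let b := Module.finBasis k U
    have key : ∀ x : U ⊗[k] W,
        x = ∑ i, b i ⊗ₜ[k] (TensorProduct.lid k W ((b.coord i).rTensor W x)) := by
      intro x
      induction x using TensorProduct.induction_on with
      | zero => simp
      | tmul u w =>
        conv_lhs => rw [← b.sum_repr u]
        rw [TensorProduct.sum_tmul]
        refine Finset.sum_congr rfl fun i _ => ?_
        rw [TensorProduct.smul_tmul]
        simp
      | add x y hx hy =>
        conv_lhs => rw [hx, hy]
        simp [TensorProduct.tmul_add, Finset.sum_add_distrib]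
    have hz : ∀ i, TensorProduct.lid k W ((b.coord i).rTensor W x) = 0 := by
      intro i
      have : TensorProduct.lid k W ((b.coord i).rTensor W x) ∈ Y := by
        intro u
        have h1 := hS ((b.coord i).smulRight u) x hx
        have h2 : ∀ x : U ⊗[k] W, ((b.coord i).smulRight u).rTensor W x
            = u ⊗ₜ[k] TensorProduct.lid k W ((b.coord i).rTensor W x) := by
          intro x
          induction x using TensorProduct.induction_on with
          | zero => simp
          | tmul u w => simp [TensorProduct.smul_tmul]
          | add x y hx hy => simp only [map_add, hx, hy, TensorProduct.tmul_add]
        rwa [h2] at h1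
      rw [h] at this
      simpa using this
    rw [key x]
    simp [hz]
  · right
    rw [eq_top_iff]
    rintro x -
    induction x using TensorProduct.induction_on with
    | zero => exact X.zero_mem
    | tmul u w => exact (h ▸ Submodule.mem_top : w ∈ Y) u
    | add x y hx hy => exact X.add_mem hx hy
end
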